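/- arXiv:2007.00132 — 5 statements merged into one kernel-verified Lean document; each statement's English description precedes it below -/
import Mathlib

section
/- Let K ≥ 1 be an integer, P a real n×n̄ matrix, S_1,…,S_K symmetric positive semidefinite n̄×n̄ matrices with S_1+⋯+S_K positive definite, 𝒯 ⊆ ℝ_{≥0}^K a nonempty convex compact monotone set containing a point with all coordinates positive, and ρ > 0. Let X be a symmetric n×n matrix, x ∈ ℝ^n, ξ ∈ ℝ, and set κ = 3·ln(6K). If ζᵀXζ + 2xᵀζ ≤ ξ holds for every ζ ∈ 𝒳[κ·ρ], then there exist λ ∈ ℝ^K with λ ≥ 0 and τ ∈ ℝ such that [[∑_k λ_k S_k − PᵀXP, −Pᵀx],[−xᵀP, τ]] is positive semidefinite and ρ·φ_𝒯(λ) + τ ≤ ξ. -/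
open Matrix BigOperators

noncomputable section

/-- The ellitope `𝒳[s]`: image under `z ↦ P z` of the set of `z` with
`zᵀ S_k z ≤ s t_k` for some `t ∈ 𝒯`. -/
def ellitope {n nb K : ℕ} (P : Matrix (Fin n) (Fin nb) ℝ)
    (S : Fin K → Matrix (Fin nb) (Fin nb) ℝ) (T : Set (Fin K → ℝ)) (s : ℝ) :
    Set (Fin n → ℝ) :=
  {x | ∃ z : Fin nb → ℝ, ∃ t ∈ T, x = P *ᵥ z ∧ ∀ k, z ⬝ᵥ (S k) *ᵥ z ≤ s * t k}

/-- Support function `φ_𝒯(λ) = max_{t ∈ 𝒯} λᵀ t`. -/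
def suppFn {K : ℕ} (T : Set (Fin K → ℝ)) (lam : Fin K → ℝ) : ℝ :=
  sSup ((fun t => ∑ k, lam k * t k) '' T)

/-- `Q_+ = [[Q, q],[qᵀ, 0]]`. -/
def qPlus {m : ℕ} (Q : Matrix (Fin m) (Fin m) ℝ) (q : Fin m → ℝ) :
    Matrix (Fin m ⊕ Unit) (Fin m ⊕ Unit) ℝ :=
  Matrix.fromBlocks Q (Matrix.of fun i _ => q i) (Matrix.of fun _ j => q j) 0

/-- `BlockDiag(M, μ)`. -/
def blockDiagOne {m : ℕ} (M : Matrix (Fin m) (Fin m) ℝ) (μ : ℝ) :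
    Matrix (Fin m ⊕ Unit) (Fin m ⊕ Unit) ℝ :=
  Matrix.fromBlocks M 0 0 (Matrix.of fun _ _ => μ)

/-!
By Lagrange duality, it suffices to bound the mean of the objective over every finite distribution
whose second moments `𝔼 uᵀ S_k u` are at most `ρ t_k` for some `t ∈ 𝒯`. Let `v` be the mean of such
a distribution and `A Aᵀ` its covariance. The objective depends only on these, so it may be
evaluated at `v ± A η` for a sign vector `η` instead: once `A` is rotated so that `Aᵀ Q A` is
diagonal, the quadratic form `Q` takes the value `tr (Aᵀ Q A)` at `A η` for every `η`, and the
linear terms cancel between the two signs. It remains to find one `η` for which both points lie in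
the dilated ellitope. For positive semidefinite `N`, Gaussian linearisation
`exp (s²) = 𝔼 exp (√2 s g)` and Jensen's inequality over the spectral decomposition give
`𝔼 exp (ηᵀ N η / (3 tr N)) ≤ √3`; summing over the `2 K` forms involved, some `η` keeps them all
below `c tr N` as soon as `2 √3 K < exp (c / 3)`.
-/

/-- The vector of `±1` entries of a sign pattern `η`. Sign patterns form the finite type `ι → ℤˣ`,
so that `𝔼 η` is the expectation over independent uniform (Rademacher) signs. -/
def signVector {ι : Type*} (η : ι → ℤˣ) : ι → ℝ := fun i => ((η i : ℤ) : ℝ)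

lemma signVector_sq {ι : Type*} (η : ι → ℤˣ) (i : ι) : signVector η i ^ 2 = 1 := by
  rcases Int.units_eq_one_or (η i) with h | h <;> simp [signVector, h]

lemma signVector_const_mul {ι : Type*} (ε : ℤˣ) (η : ι → ℤˣ) :
    signVector (fun i => ε * η i) = ε • signVector η := by
  ext i
  simp [signVector, Units.smul_def]

section Rademacher

open MeasureTheory ProbabilityTheory

lemma exp_sq_eq_integral_gaussianReal (s : ℝ) :
    Real.exp (s ^ 2) = ∫ g, Real.exp (√2 * s * g) ∂gaussianReal 0 1 := by
  have h := congrFun (mgf_id_gaussianReal (μ := 0) (v := 1)) (√2 * s)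
  simp only [mgf, id, zero_mul, zero_add, NNReal.coe_one, one_mul] at h
  rw [h, mul_pow, Real.sq_sqrt zero_le_two, mul_div_cancel_left₀ _ two_ne_zero]

lemma gaussianPDFReal_zero_one_mul_exp (a g : ℝ) :
    gaussianPDFReal 0 1 g * Real.exp (a * g ^ 2) =
      (√(2 * Real.pi))⁻¹ * Real.exp (-(1 / 2 - a) * g ^ 2) := by
  rw [gaussianPDFReal, mul_assoc, ← Real.exp_add, NNReal.coe_one]
  ring_nf

lemma integrable_exp_mul_sq_gaussianReal {a : ℝ} (ha : 2 * a < 1) :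
    Integrable (fun g => Real.exp (a * g ^ 2)) (gaussianReal 0 1) := by
  rw [gaussianReal_of_var_ne_zero 0 one_ne_zero,
    integrable_withDensity_iff (measurable_gaussianPDF 0 1)
      (.of_forall fun _ => gaussianPDF_lt_top)]
  simp only [toReal_gaussianPDF, mul_comm _ (gaussianPDFReal 0 1 _),
    gaussianPDFReal_zero_one_mul_exp]
  exact (integrable_exp_neg_mul_sq (by linarith)).const_mul _

lemma integral_exp_mul_sq_gaussianReal {a : ℝ} (ha : 2 * a < 1) :
    ∫ g, Real.exp (a * g ^ 2) ∂gaussianReal 0 1 = (√(1 - 2 * a))⁻¹ := by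
  have ha' : 0 < 1 - 2 * a := by linarith
  simp only [integral_gaussianReal_eq_integral_smul one_ne_zero, smul_eq_mul,
    gaussianPDFReal_zero_one_mul_exp]
  rw [integral_const_mul, integral_gaussian, ← Real.sqrt_inv, ← Real.sqrt_inv,
    ← Real.sqrt_mul (by positivity)]
  congr 1
  field_simp

variable {ι : Type*} [Fintype ι] [DecidableEq ι]

lemma expect_exp_dotProduct_signVector (b : ι → ℝ) :
    𝔼 η : ι → ℤˣ, Real.exp (b ⬝ᵥ signVector η) = ∏ i, Real.cosh (b i) := by
  simp only [Fintype.expect_eq_sum_div_card, dotProduct, signVector, Real.exp_sum]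
  rw [← Fintype.prod_sum (fun i (ε : ℤˣ) => Real.exp (b i * ((ε : ℤ) : ℝ)))]
  simp [Real.cosh_eq, Finset.prod_div_distrib]

lemma expect_exp_dotProduct_signVector_le (b : ι → ℝ) :
    𝔼 η : ι → ℤˣ, Real.exp (b ⬝ᵥ signVector η) ≤ Real.exp ((∑ i, b i ^ 2) / 2) := by
  rw [expect_exp_dotProduct_signVector, Finset.sum_div, Real.exp_sum]
  exact Finset.prod_le_prod (fun i _ => (Real.cosh_pos _).le)
    fun i _ => Real.cosh_le_exp_half_sq _

lemma expect_exp_sq_dotProduct_signVector_le {b : ι → ℝ} (hb : 2 * ∑ i, b i ^ 2 < 1) :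
    𝔼 η : ι → ℤˣ, Real.exp ((b ⬝ᵥ signVector η) ^ 2) ≤ (√(1 - 2 * ∑ i, b i ^ 2))⁻¹ := by
  have hint : ∀ η : ι → ℤˣ,
      Integrable (fun g => Real.exp (√2 * (b ⬝ᵥ signVector η) * g)) (gaussianReal 0 1) :=
    fun η => integrable_exp_mul_gaussianReal _
  have hpoint : ∀ g : ℝ, 𝔼 η : ι → ℤˣ, Real.exp (√2 * (b ⬝ᵥ signVector η) * g) ≤
      Real.exp ((∑ i, b i ^ 2) * g ^ 2) := by
    intro g
    have h := expect_exp_dotProduct_signVector_le ((√2 * g) • b)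
    simp only [smul_dotProduct, Pi.smul_apply, smul_eq_mul, mul_pow, Real.sq_sqrt zero_le_two,
      ← Finset.mul_sum] at h
    convert h using 3 <;> ring_nf
  calc 𝔼 η : ι → ℤˣ, Real.exp ((b ⬝ᵥ signVector η) ^ 2)
      = ∫ g, 𝔼 η : ι → ℤˣ, Real.exp (√2 * (b ⬝ᵥ signVector η) * g) ∂gaussianReal 0 1 := by
        simp only [exp_sq_eq_integral_gaussianReal, Fintype.expect_eq_sum_div_card]
        rw [integral_div, integral_finsetSum _ fun η _ => hint η]
    _ ≤ ∫ g, Real.exp ((∑ i, b i ^ 2) * g ^ 2) ∂gaussianReal 0 1 := by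
        refine integral_mono ?_ (integrable_exp_mul_sq_gaussianReal hb) hpoint
        simp only [Fintype.expect_eq_sum_div_card]
        exact (integrable_finsetSum _ fun η _ => hint η).div_const _
    _ = (√(1 - 2 * ∑ i, b i ^ 2))⁻¹ := integral_exp_mul_sq_gaussianReal hb

end Rademacher

section QuadraticForm

variable {m ι : Type*} [Fintype m]

lemma add_dotProduct_mulVec_add_add_sub (Q : Matrix m m ℝ) (v w : m → ℝ) :
    (v + w) ⬝ᵥ Q *ᵥ (v + w) + (v - w) ⬝ᵥ Q *ᵥ (v - w) =
      2 * (v ⬝ᵥ Q *ᵥ v) + 2 * (w ⬝ᵥ Q *ᵥ w) := by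
  simp only [mulVec_add, mulVec_sub, dotProduct_add, dotProduct_sub, add_dotProduct,
    sub_dotProduct]
  ring

lemma isHermitian_transpose_mul_mul {Q : Matrix m m ℝ} (hQ : Q.IsHermitian) (A : Matrix m ι ℝ) :
    (Aᵀ * Q * A).IsHermitian := by
  simpa only [conjTranspose_eq_transpose_of_trivial] using isHermitian_conjTranspose_mul_mul A hQ

variable [Fintype ι]

lemma mulVec_dotProduct_mulVec_mulVec (Q : Matrix m m ℝ) (A : Matrix m ι ℝ) (y : ι → ℝ) :
    (A *ᵥ y) ⬝ᵥ Q *ᵥ (A *ᵥ y) = y ⬝ᵥ (Aᵀ * Q * A) *ᵥ y := by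
  rw [Matrix.mul_assoc, ← mulVec_mulVec, ← mulVec_mulVec, dotProduct_mulVec y, vecMul_transpose]

lemma trace_transpose_mul_mul_eq_sum (Q : Matrix m m ℝ) (A : Matrix m ι ℝ) :
    (Aᵀ * Q * A).trace = ∑ i, A.col i ⬝ᵥ Q *ᵥ A.col i := by
  refine Finset.sum_congr rfl fun i _ => ?_
  rw [diag_apply, Matrix.mul_assoc, mul_apply_eq_vecMul]
  rfl

end QuadraticForm

section Chaos

variable {ι : Type*} [Fintype ι]

lemma exists_orthogonal_conj_eq_diagonal [DecidableEq ι] {N : Matrix ι ι ℝ}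
    (hN : N.IsHermitian) :
    ∃ U : Matrix ι ι ℝ, ∃ d : ι → ℝ, U * Uᵀ = 1 ∧ Uᵀ * N * U = diagonal d := by
  refine ⟨hN.eigenvectorUnitary, hN.eigenvalues, ?_, ?_⟩
  · simpa [star_eq_conjTranspose] using Unitary.coe_mul_star_self hN.eigenvectorUnitary
  · simpa [Unitary.conjStarAlgAut_apply, star_eq_conjTranspose] using
      hN.conjStarAlgAut_star_eigenvectorUnitary

lemma dotProduct_diagonal_mulVec [DecidableEq ι] (d y : ι → ℝ) :
    y ⬝ᵥ diagonal d *ᵥ y = ∑ i, d i * y i ^ 2 := by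
  simp only [dotProduct, mulVec_diagonal]
  exact Finset.sum_congr rfl fun i _ => by ring

lemma exists_convex_combination_sq_of_posSemidef {N : Matrix ι ι ℝ} (hN : N.PosSemidef)
    (htr : 0 < N.trace) :
    ∃ (w : ι → ℝ) (b : ι → ι → ℝ), (∀ j, 0 ≤ w j) ∧ ∑ j, w j = 1 ∧
      (∀ j, ∑ i, b j i ^ 2 = N.trace) ∧
      ∀ y, y ⬝ᵥ N *ᵥ y = ∑ j, w j * (b j ⬝ᵥ y) ^ 2 := by
  classical
  obtain ⟨U, d, hU, hd⟩ := exists_orthogonal_conj_eq_diagonal hN.isHermitian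
  have hd0 : ∀ j, 0 ≤ d j := by
    rw [← posSemidef_diagonal_iff, ← hd, ← conjTranspose_eq_transpose_of_trivial]
    exact hN.conjTranspose_mul_mul_same U
  have htrace : ∑ j, d j = N.trace := by
    rw [← trace_diagonal, ← hd, trace_mul_cycle, hU, Matrix.one_mul]
  have hcol : ∀ j, ∑ i, U i j ^ 2 = 1 := by
    intro j
    have hUU : Uᵀ * U = 1 := mul_eq_one_comm.mp hU
    simpa [mul_apply, sq] using congrFun₂ hUU j j
  refine ⟨fun j => d j / N.trace, fun j => √N.trace • Uᵀ j,
    fun j => div_nonneg (hd0 j) htr.le, ?_, fun j => ?_, fun y => ?_⟩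
  · rw [← Finset.sum_div, htrace, div_self htr.ne']
  · simp only [Pi.smul_apply, smul_eq_mul, mul_pow, Real.sq_sqrt htr.le, transpose_apply,
      ← Finset.mul_sum, hcol, mul_one]
  · have hy : y = U *ᵥ (Uᵀ *ᵥ y) := by rw [mulVec_mulVec, hU, one_mulVec]
    conv_lhs => rw [hy, mulVec_dotProduct_mulVec_mulVec, hd, dotProduct_diagonal_mulVec]
    refine Finset.sum_congr rfl fun j _ => ?_
    rw [smul_dotProduct, smul_eq_mul, mul_pow, Real.sq_sqrt htr.le, ← mul_assoc,
      div_mul_cancel₀ _ htr.ne']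
    rfl

lemma expect_exp_signVector_dotProduct_mulVec_le [DecidableEq ι] {N : Matrix ι ι ℝ}
    (hN : N.PosSemidef) (htr : 2 * N.trace < 1) :
    𝔼 η : ι → ℤˣ, Real.exp (signVector η ⬝ᵥ N *ᵥ signVector η) ≤ (√(1 - 2 * N.trace))⁻¹ := by
  rcases hN.trace_nonneg.eq_or_lt with h0 | hpos
  · simp [hN.trace_eq_zero_iff.mp h0.symm]
  obtain ⟨w, b, hw, hw1, hb, hsq⟩ := exists_convex_combination_sq_of_posSemidef hN hpos
  calc 𝔼 η : ι → ℤˣ, Real.exp (signVector η ⬝ᵥ N *ᵥ signVector η)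
      ≤ 𝔼 η : ι → ℤˣ, ∑ j, w j * Real.exp ((b j ⬝ᵥ signVector η) ^ 2) := by
        refine Finset.expect_le_expect fun η _ => ?_
        rw [hsq]
        exact convexOn_exp.map_sum_le (fun j _ => hw j) hw1 fun _ _ => Set.mem_univ _
    _ = ∑ j, w j * 𝔼 η : ι → ℤˣ, Real.exp ((b j ⬝ᵥ signVector η) ^ 2) := by
        simp only [Finset.expect_sum_comm, Finset.mul_expect]
    _ ≤ ∑ j, w j * (√(1 - 2 * N.trace))⁻¹ := by
        gcongr with j
        · exact hw j
        · simpa only [hb] using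
            expect_exp_sq_dotProduct_signVector_le (b := b j) (by rwa [hb])
    _ = (√(1 - 2 * N.trace))⁻¹ := by rw [← Finset.sum_mul, hw1, one_mul]

lemma expect_exp_signVector_dotProduct_mulVec_div_le [DecidableEq ι] {N : Matrix ι ι ℝ}
    (hN : N.PosSemidef) :
    𝔼 η : ι → ℤˣ, Real.exp (signVector η ⬝ᵥ N *ᵥ signVector η / (3 * N.trace)) ≤ √3 := by
  have hle : (3 * N.trace)⁻¹ * N.trace ≤ 1 / 3 := by
    rw [mul_inv, mul_assoc, one_div]
    exact mul_le_of_le_one_right (by norm_num) inv_mul_le_one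
  have hpsd : ((3 * N.trace)⁻¹ • N).PosSemidef :=
    hN.smul (inv_nonneg.mpr (mul_nonneg zero_le_three hN.trace_nonneg))
  have h := expect_exp_signVector_dotProduct_mulVec_le hpsd
    (by rw [trace_smul, smul_eq_mul]; linarith)
  simp only [trace_smul, smul_mulVec, dotProduct_smul, smul_eq_mul, inv_mul_eq_div] at h hle
  refine h.trans ?_
  rw [← Real.sqrt_inv]
  exact Real.sqrt_le_sqrt (inv_le_of_inv_le₀ (by norm_num) (by linarith))

lemma exists_signVector_forall_dotProduct_mulVec_le {κ : Type*} [Fintype κ]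
    {N : κ → Matrix ι ι ℝ} (hN : ∀ k, (N k).PosSemidef) {c : ℝ}
    (hc : √3 * Fintype.card κ < Real.exp (c / 3)) :
    ∃ η : ι → ℤˣ, ∀ k, signVector η ⬝ᵥ N k *ᵥ signVector η ≤ c * (N k).trace := by
  classical
  set f : κ → (ι → ℤˣ) → ℝ := fun k η =>
    Real.exp (signVector η ⬝ᵥ N k *ᵥ signVector η / (3 * (N k).trace)) with hf
  have hmean : 𝔼 η, ∑ k, f k η < Real.exp (c / 3) := by
    rw [Finset.expect_sum_comm]
    refine (Finset.sum_le_card_nsmul _ _ _ fun k _ =>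
      expect_exp_signVector_dotProduct_mulVec_div_le (hN k)).trans_lt ?_
    rwa [nsmul_eq_mul, mul_comm]
  obtain ⟨η, -, hη⟩ := Finset.exists_lt_of_expect_lt Finset.univ_nonempty hmean
  refine ⟨η, fun k => ?_⟩
  rcases (hN k).trace_nonneg.eq_or_lt with h0 | hpos
  · simp [(hN k).trace_eq_zero_iff.mp h0.symm]
  · have hk : f k η < Real.exp (c / 3) :=
      (Finset.single_le_sum (f := fun k => f k η) (fun k _ => (Real.exp_pos _).le)
        (Finset.mem_univ k)).trans_lt hη
    rw [hf, Real.exp_lt_exp, div_lt_iff₀ (by positivity)] at hk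
    linarith

end Chaos

section Rounding

variable {m ι κ : Type*} [Fintype m] [Fintype ι]

lemma trace_transpose_mul_mul_fromCols (Q : Matrix m m ℝ) (v : m → ℝ) (A : Matrix m ι ℝ) :
    ((fromCols (replicateCol Unit v) A)ᵀ * Q * fromCols (replicateCol Unit v) A).trace =
      v ⬝ᵥ Q *ᵥ v + (Aᵀ * Q * A).trace := by
  simp only [trace_transpose_mul_mul_eq_sum, Fintype.sum_sum_type, Finset.univ_unique,
    Finset.sum_singleton]
  rfl

lemma trace_transpose_mul_mul_mul_orthogonal [DecidableEq ι] {U : Matrix ι ι ℝ}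
    (hU : U * Uᵀ = 1) (Q : Matrix m m ℝ) (A : Matrix m ι ℝ) :
    ((A * U)ᵀ * Q * (A * U)).trace = (Aᵀ * Q * A).trace := by
  have hassoc : (A * U)ᵀ * Q * (A * U) = Uᵀ * (Aᵀ * Q * A) * U := by
    simp only [transpose_mul, Matrix.mul_assoc]
  rw [hassoc, trace_mul_cycle, hU, Matrix.one_mul]

lemma units_smul_dotProduct_mulVec (σ : ℤˣ) (Q : Matrix m m ℝ) (z : m → ℝ) :
    (σ • z) ⬝ᵥ Q *ᵥ (σ • z) = z ⬝ᵥ Q *ᵥ z := by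
  rcases Int.units_eq_one_or σ with rfl | rfl <;> simp [mulVec_neg]

variable [Fintype κ] {S : κ → Matrix m m ℝ} {c : ℝ}

lemma exists_signVector_forall_add_mulVec_le (hS : ∀ k, (S k).PosSemidef)
    (hc : √3 * (2 * Fintype.card κ) < Real.exp (c / 3)) (v : m → ℝ) (A : Matrix m ι ℝ) :
    ∃ η : ι → ℤˣ, ∀ (σ : ℤˣ) (k : κ),
      (v + σ • A *ᵥ signVector η) ⬝ᵥ S k *ᵥ (v + σ • A *ᵥ signVector η) ≤
        c * (v ⬝ᵥ S k *ᵥ v + (Aᵀ * S k * A).trace) := by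
  -- An extra sign on `v` turns each `v ± A η` into a homogeneous sign sum.
  let B : ℤˣ → Matrix m (Unit ⊕ ι) ℝ := fun σ => fromCols (replicateCol Unit v) (σ • A)
  obtain ⟨θ, hθ⟩ := exists_signVector_forall_dotProduct_mulVec_le
    (N := fun i : ℤˣ × κ => (B i.1)ᵀ * S i.2 * B i.1) (c := c)
    (fun i => by
      simpa only [conjTranspose_eq_transpose_of_trivial] using
        (hS i.2).conjTranspose_mul_mul_same (B i.1))
    (by simpa using hc)
  refine ⟨fun i => θ (.inl ()) * θ (.inr i), fun σ k => ?_⟩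
  have hB : B σ *ᵥ signVector θ =
      θ (.inl ()) • (v + σ • A *ᵥ signVector fun i => θ (.inl ()) * θ (.inr i)) := by
    have hcol : replicateCol Unit v *ᵥ (signVector θ ∘ Sum.inl) = θ (.inl ()) • v := by
      ext i
      simp [mulVec, dotProduct, signVector, Units.smul_def, mul_comm]
    rw [fromCols_mulVec, hcol, signVector_const_mul, smul_mulVec, mulVec_smul, smul_add,
      smul_comm σ, smul_smul, Int.units_mul_self, one_smul]
    rfl
  have htr : ((B σ)ᵀ * S k * B σ).trace = v ⬝ᵥ S k *ᵥ v + (Aᵀ * S k * A).trace := by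
    rw [trace_transpose_mul_mul_fromCols]
    rcases Int.units_eq_one_or σ with rfl | rfl <;> simp
  have hk := hθ (σ, k)
  rw [← mulVec_dotProduct_mulVec_mulVec, htr, hB] at hk
  rwa [units_smul_dotProduct_mulVec] at hk

lemma exists_dotProduct_mulVec_eq_trace_and_forall_le (hS : ∀ k, (S k).PosSemidef)
    (hc : √3 * (2 * Fintype.card κ) < Real.exp (c / 3)) {Q : Matrix m m ℝ}
    (hQ : Q.IsHermitian) (v : m → ℝ) (A : Matrix m ι ℝ) :
    ∃ w : m → ℝ, w ⬝ᵥ Q *ᵥ w = (Aᵀ * Q * A).trace ∧ ∀ (σ : ℤˣ) (k : κ),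
      (v + σ • w) ⬝ᵥ S k *ᵥ (v + σ • w) ≤ c * (v ⬝ᵥ S k *ᵥ v + (Aᵀ * S k * A).trace) := by
  classical
  obtain ⟨U, d, hU, hd⟩ :=
    exists_orthogonal_conj_eq_diagonal (isHermitian_transpose_mul_mul hQ A)
  obtain ⟨η, hη⟩ := exists_signVector_forall_add_mulVec_le hS hc v (A * U)
  simp only [trace_transpose_mul_mul_mul_orthogonal hU] at hη
  refine ⟨(A * U) *ᵥ signVector η, ?_, hη⟩
  rw [← trace_transpose_mul_mul_mul_orthogonal hU, mulVec_dotProduct_mulVec_mulVec]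
  have hdiag : (A * U)ᵀ * Q * (A * U) = diagonal d := by
    rw [← hd]
    simp only [transpose_mul, Matrix.mul_assoc]
  simp only [hdiag, dotProduct_diagonal_mulVec, signVector_sq, mul_one, trace_diagonal]

end Rounding

section Moments

variable {m ι κ : Type*} [Fintype m] [Fintype ι] {p : ι → ℝ}

lemma sum_mul_sub_mean_dotProduct_mulVec (hp1 : ∑ i, p i = 1) (u : ι → m → ℝ)
    (Q : Matrix m m ℝ) {v : m → ℝ} (hv : v = ∑ i, p i • u i) :
    ∑ i, p i * ((u i - v) ⬝ᵥ Q *ᵥ (u i - v)) =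
      ∑ i, p i * (u i ⬝ᵥ Q *ᵥ u i) - v ⬝ᵥ Q *ᵥ v := by
  have hleft : ∑ i, p i * (u i ⬝ᵥ Q *ᵥ v) = v ⬝ᵥ Q *ᵥ v := by
    conv_rhs => rw [hv, sum_dotProduct, ← hv]
    simp only [smul_dotProduct, smul_eq_mul]
  have hright : ∑ i, p i * (v ⬝ᵥ Q *ᵥ u i) = v ⬝ᵥ Q *ᵥ v := by
    conv_rhs => enter [2]; rw [hv, mulVec_sum]
    simp only [mulVec_smul, dotProduct_sum, dotProduct_smul, smul_eq_mul]
  simp only [mulVec_sub, dotProduct_sub, sub_dotProduct, mul_sub, Finset.sum_sub_distrib,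
    hleft, hright, ← Finset.sum_mul, hp1]
  ring

lemma exists_covariance_factor (hp : ∀ i, 0 ≤ p i) (hp1 : ∑ i, p i = 1) (u : ι → m → ℝ) :
    ∃ A : Matrix m ι ℝ, ∀ Q : Matrix m m ℝ, ∑ i, p i * (u i ⬝ᵥ Q *ᵥ u i) =
      (∑ i, p i • u i) ⬝ᵥ Q *ᵥ (∑ i, p i • u i) + (Aᵀ * Q * A).trace := by
  set v := ∑ i, p i • u i with hv
  let A : Matrix m ι ℝ := .of fun a i => √(p i) * (u i - v) a
  have hA : ∀ i, A.col i = √(p i) • (u i - v) := fun i => rfl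
  refine ⟨A, fun Q => ?_⟩
  simp only [trace_transpose_mul_mul_eq_sum, hA, mulVec_smul, dotProduct_smul, smul_dotProduct,
    smul_eq_mul, ← mul_assoc, Real.mul_self_sqrt (hp _),
    sum_mul_sub_mean_dotProduct_mulVec hp1 u Q hv]
  ring

variable [Fintype κ] {S : κ → Matrix m m ℝ} {c : ℝ}

lemma nonneg_of_lt_exp_div_three [Nonempty κ]
    (hc : √3 * (2 * Fintype.card κ) < Real.exp (c / 3)) : 0 ≤ c := by
  have hcard : (1 : ℝ) ≤ Fintype.card κ := by exact_mod_cast Fintype.card_pos (α := κ)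
  have hsqrt : 1 ≤ √3 := Real.one_le_sqrt.mpr (by norm_num)
  have hexp : 1 < Real.exp (c / 3) := by nlinarith
  linarith [Real.one_lt_exp_iff.mp hexp]

lemma sum_mul_le_of_forall_dilation_le (hS : ∀ k, (S k).PosSemidef)
    (hc : √3 * (2 * Fintype.card κ) < Real.exp (c / 3)) {Q : Matrix m m ℝ}
    (hQ : Q.IsHermitian) {q : m → ℝ} {s : κ → ℝ} {ξ : ℝ}
    (hrob : ∀ z, (∀ k, z ⬝ᵥ S k *ᵥ z ≤ c * s k) → z ⬝ᵥ Q *ᵥ z + 2 * (q ⬝ᵥ z) ≤ ξ)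
    (hp : ∀ i, 0 ≤ p i) (hp1 : ∑ i, p i = 1) {u : ι → m → ℝ}
    (hu : ∀ k, ∑ i, p i * (u i ⬝ᵥ S k *ᵥ u i) ≤ s k) :
    ∑ i, p i * (u i ⬝ᵥ Q *ᵥ u i + 2 * (q ⬝ᵥ u i)) ≤ ξ := by
  obtain ⟨A, hA⟩ := exists_covariance_factor hp hp1 u
  set v := ∑ i, p i • u i with hv
  obtain ⟨w, hwQ, hwS⟩ := exists_dotProduct_mulVec_eq_trace_and_forall_le hS hc hQ v A
  have hround (σ : ℤˣ) :
      (v + σ • w) ⬝ᵥ Q *ᵥ (v + σ • w) + 2 * (q ⬝ᵥ (v + σ • w)) ≤ ξ := by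
    refine hrob _ fun k => (hwS σ k).trans ?_
    have : Nonempty κ := ⟨k⟩
    rw [← hA]
    exact mul_le_mul_of_nonneg_left (hu k) (nonneg_of_lt_exp_div_three hc)
  have hplus := hround 1
  have hminus := hround (-1)
  rw [one_smul, dotProduct_add] at hplus
  rw [Units.neg_smul, one_smul, ← sub_eq_add_neg, dotProduct_sub] at hminus
  have hpar := add_dotProduct_mulVec_add_add_sub Q v w
  have hmean : ∑ i, p i * (u i ⬝ᵥ Q *ᵥ u i + 2 * (q ⬝ᵥ u i)) =
      v ⬝ᵥ Q *ᵥ v + w ⬝ᵥ Q *ᵥ w + 2 * (q ⬝ᵥ v) := by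
    simp only [mul_add, Finset.sum_add_distrib, hA, hwQ, hv, dotProduct_sum, dotProduct_smul,
      smul_eq_mul, Finset.mul_sum, mul_left_comm]
  linarith

end Moments

section Duality

lemma nonpos_of_forall_add_mul_le {a b c : ℝ} (h : ∀ t, 0 ≤ t → a + t * b ≤ c) : b ≤ 0 := by
  by_contra! hb
  have hpos : 0 < (|c - a| + 1) / b := by positivity
  have ht := h _ hpos.le
  rw [div_mul_cancel₀ _ hb.ne'] at ht
  linarith [le_abs_self (c - a)]

variable {κ : Type*} [Fintype κ] {C : Set ((κ → ℝ) × ℝ)} {ξ : ℝ}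

lemma exists_forall_eq_dotProduct_add_mul (F : (κ → ℝ) × ℝ →ₗ[ℝ] ℝ) :
    ∃ (a : κ → ℝ) (μ : ℝ), ∀ d r, F (d, r) = a ⬝ᵥ d + μ * r := by
  classical
  let G : (κ → ℝ) →ₗ[ℝ] ℝ := F ∘ₗ LinearMap.inl ℝ (κ → ℝ) ℝ
  let a : κ → ℝ := (dotProductEquiv ℝ κ).symm G
  refine ⟨a, F (0, 1), fun d r => ?_⟩
  have hfst : F (d, 0) = a ⬝ᵥ d :=
    (LinearMap.congr_fun ((dotProductEquiv ℝ κ).apply_symm_apply G) d).symm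
  have hsnd : F (0, r) = F (0, 1) * r := by simpa [mul_comm] using F.map_smul r (0, 1)
  rw [← hfst, ← hsnd, ← map_add, Prod.mk_add_mk, add_zero, zero_add]

lemma exists_separating_dotProduct (hC : Convex ℝ C)
    (hfeas : ∀ y ∈ C, (∀ k, y.1 k < 0) → y.2 ≤ ξ) :
    ∃ (a : κ → ℝ) (μ : ℝ), ∀ y ∈ C, ∀ (d : κ → ℝ) (r : ℝ), (∀ k, d k < 0) → ξ < r →
      a ⬝ᵥ d + μ * r < a ⬝ᵥ y.1 + μ * y.2 := by
  let D : Set ((κ → ℝ) × ℝ) := (Set.univ.pi fun _ => Set.Iio 0) ×ˢ Set.Ioi ξ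
  have hDconv : Convex ℝ D := (convex_pi fun _ _ => convex_Iio 0).prod (convex_Ioi ξ)
  have hDopen : IsOpen D :=
    (isOpen_set_pi Set.finite_univ fun _ _ => isOpen_Iio).prod isOpen_Ioi
  have hdisj : Disjoint D C := Set.disjoint_left.mpr fun y ⟨hneg, hξ⟩ hyC =>
    (hfeas y hyC fun k => hneg k trivial).not_gt hξ
  obtain ⟨F, c, hFD, hFC⟩ := geometric_hahn_banach_open hDconv hDopen hC hdisj
  obtain ⟨a, μ, hF⟩ := exists_forall_eq_dotProduct_add_mul F.toLinearMap
  refine ⟨a, μ, fun y hy d r hd hr => ?_⟩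
  rw [← hF, ← hF]
  exact (hFD (d, r) ⟨fun k _ => hd k, hr⟩).trans_le (hFC y hy)

lemma dotProduct_add_mul_le_of_forall_lt {a : κ → ℝ} {μ c : ℝ}
    (h : ∀ (d : κ → ℝ) (r : ℝ), (∀ k, d k < 0) → ξ < r → a ⬝ᵥ d + μ * r < c)
    {d : κ → ℝ} {r : ℝ} (hd : ∀ k, d k ≤ 0) (hr : ξ ≤ r) : a ⬝ᵥ d + μ * r ≤ c := by
  have hcont : Continuous fun ε : ℝ => a ⬝ᵥ (fun k => d k - ε) + μ * (r + ε) := by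
    unfold dotProduct
    fun_prop
  have hlim := (hcont.tendsto 0).mono_left (nhdsWithin_le_nhds (s := Set.Ioi 0))
  simp only [sub_zero, add_zero] at hlim
  refine le_of_tendsto hlim ?_
  filter_upwards [self_mem_nhdsWithin] with ε (hε : 0 < ε)
  exact (h _ _ (fun k => by linarith [hd k]) (by linarith)).le

lemma exists_lagrange_multipliers (hC : Convex ℝ C)
    (hfeas : ∀ y ∈ C, (∀ k, y.1 k < 0) → y.2 ≤ ξ) (hslater : ∃ y ∈ C, ∀ k, y.1 k < 0) :
    ∃ lam : κ → ℝ, (∀ k, 0 ≤ lam k) ∧ ∀ y ∈ C, y.2 - lam ⬝ᵥ y.1 ≤ ξ := by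
  classical
  obtain ⟨a, μ, hsep⟩ := exists_separating_dotProduct hC hfeas
  obtain ⟨y₀, hy₀, hy₀neg⟩ := hslater
  have hle : ∀ y ∈ C, ∀ d r, (∀ k, d k ≤ 0) → ξ ≤ r → a ⬝ᵥ d + μ * r ≤ a ⬝ᵥ y.1 + μ * y.2 :=
    fun y hy d r => dotProduct_add_mul_le_of_forall_lt (hsep y hy)
  have ha : ∀ k, 0 ≤ a k := fun k => by
    rw [← neg_nonpos]
    refine nonpos_of_forall_add_mul_le (a := μ * ξ) (c := a ⬝ᵥ y₀.1 + μ * y₀.2) fun t ht => ?_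
    have h := hle y₀ hy₀ (Pi.single k (-t)) ξ
      (Pi.single_nonpos.mpr (neg_nonpos.mpr ht)) le_rfl
    rw [dotProduct_single] at h
    linarith
  have hμ : μ ≤ 0 := by
    refine nonpos_of_forall_add_mul_le (a := μ * ξ) (c := a ⬝ᵥ y₀.1 + μ * y₀.2) fun t ht => ?_
    have h := hle y₀ hy₀ 0 (ξ + t) (fun _ => le_rfl) (by linarith)
    rw [dotProduct_zero] at h
    linarith
  have hμneg : μ < 0 := by
    refine hμ.lt_of_ne fun h0 => ?_
    simpa [h0] using hsep y₀ hy₀ y₀.1 (ξ + 1) hy₀neg (lt_add_one ξ)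
  refine ⟨(-μ)⁻¹ • a, fun k => ?_, fun y hy => ?_⟩
  · exact mul_nonneg (inv_nonneg.mpr (neg_nonneg.mpr hμ)) (ha k)
  · have h := hle y hy 0 ξ (fun _ => le_rfl) le_rfl
    have hdiv : -μ * ((-μ)⁻¹ * (a ⬝ᵥ y.1)) = a ⬝ᵥ y.1 :=
      mul_inv_cancel_left₀ (neg_ne_zero.mpr hμneg.ne) _
    rw [dotProduct_zero] at h
    rw [smul_dotProduct, smul_eq_mul]
    exact le_of_mul_le_mul_left (by linarith) (neg_pos.mpr hμneg)

end Duality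

section Bordered

variable {m : Type*} [Fintype m] {M : Matrix m m ℝ} {b : m → ℝ} {τ : ℝ}

lemma sumElim_dotProduct_bordered_mulVec (u : m → ℝ) (y : ℝ) :
    Sum.elim u (fun _ : Unit => y) ⬝ᵥ fromBlocks M (replicateCol Unit b) (replicateRow Unit b)
        (of fun _ _ => τ) *ᵥ Sum.elim u (fun _ => y) =
      u ⬝ᵥ M *ᵥ u + 2 * y * (b ⬝ᵥ u) + τ * y ^ 2 := by
  have hcol : replicateCol Unit b *ᵥ (fun _ => y) = y • b := by
    ext i
    simp [mulVec, dotProduct, mul_comm]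
  rw [fromBlocks_mulVec, Sum.elim_comp_inl, Sum.elim_comp_inr, sumElim_dotProduct_sumElim, hcol,
    dotProduct_add, dotProduct_smul, dotProduct_comm u b]
  simp only [dotProduct, mulVec, smul_eq_mul, Finset.univ_unique, PUnit.default_eq_unit,
    Pi.add_apply, replicateRow_apply, of_apply, Finset.sum_const, Finset.card_singleton, one_smul]
  ring

lemma posSemidef_bordered (hM : M.IsHermitian)
    (h : ∀ u : m → ℝ, 0 ≤ u ⬝ᵥ M *ᵥ u + 2 * (b ⬝ᵥ u) + τ) :
    (fromBlocks M (replicateCol Unit b) (replicateRow Unit b) (of fun _ _ => τ)).PosSemidef := by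
  refine .of_dotProduct_mulVec_nonneg (hM.fromBlocks (by ext; simp) (by ext; simp)) fun w => ?_
  obtain ⟨u, y, rfl⟩ : ∃ (u : m → ℝ) (y : ℝ), w = Sum.elim u fun _ => y :=
    ⟨w ∘ .inl, w (.inr ()), by ext (i | i) <;> rfl⟩
  rw [star_trivial, sumElim_dotProduct_bordered_mulVec]
  have hscale : ∀ s : ℝ, 0 ≤ s ^ 2 * (u ⬝ᵥ M *ᵥ u) + 2 * s * (b ⬝ᵥ u) + τ := by
    intro s
    have hs := h (s • u)
    simp only [mulVec_smul, dotProduct_smul, smul_dotProduct, smul_eq_mul] at hs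
    linarith
  rcases eq_or_ne y 0 with rfl | hy
  · suffices -(u ⬝ᵥ M *ᵥ u) ≤ 0 by linarith
    refine nonpos_of_forall_add_mul_le (a := 0) (c := τ) fun t ht => ?_
    have hpos := hscale √t
    have hneg := hscale (-√t)
    rw [neg_sq] at hneg
    rw [Real.sq_sqrt ht] at hpos hneg
    linarith
  · refine (mul_nonneg (sq_nonneg y) (hscale y⁻¹)).trans_eq ?_
    field_simp

end Bordered

section ApproximateSLemma

variable {m κ : Type*} [Fintype m] [Fintype κ]

lemma dotProduct_sum_smul_mulVec (lam : κ → ℝ) (S : κ → Matrix m m ℝ) (z : m → ℝ) :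
    z ⬝ᵥ (∑ k, lam k • S k) *ᵥ z = lam ⬝ᵥ fun k => z ⬝ᵥ S k *ᵥ z := by
  simp only [sum_mulVec, dotProduct_sum, smul_mulVec, dotProduct_smul, smul_eq_mul]
  rfl

lemma exists_multipliers_of_forall_dilation_le {S : κ → Matrix m m ℝ}
    (hS : ∀ k, (S k).PosSemidef) {c : ℝ} (hc : √3 * (2 * Fintype.card κ) < Real.exp (c / 3))
    {Q : Matrix m m ℝ} (hQ : Q.IsHermitian) {q : m → ℝ} {ξ : ℝ} {T : Set (κ → ℝ)}
    (hT : Convex ℝ T) (hTpos : ∃ t ∈ T, ∀ k, 0 < t k)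
    (hrob : ∀ z, ∀ t ∈ T, (∀ k, z ⬝ᵥ S k *ᵥ z ≤ c * t k) → z ⬝ᵥ Q *ᵥ z + 2 * (q ⬝ᵥ z) ≤ ξ) :
    ∃ lam : κ → ℝ, (∀ k, 0 ≤ lam k) ∧ ∀ z, ∀ t ∈ T,
      lam ⬝ᵥ t ≤ z ⬝ᵥ (∑ k, lam k • S k - Q) *ᵥ z - 2 * (q ⬝ᵥ z) + ξ := by
  let F : (m → ℝ) × T → (κ → ℝ) × ℝ := fun w =>
    (fun k => w.1 ⬝ᵥ S k *ᵥ w.1 - w.2.1 k, w.1 ⬝ᵥ Q *ᵥ w.1 + 2 * (q ⬝ᵥ w.1))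
  have hfeas : ∀ y ∈ convexHull ℝ (Set.range F), (∀ k, y.1 k < 0) → y.2 ≤ ξ := by
    intro y hy hneg
    obtain ⟨ι, _, p, _, hp, hp1, hF, rfl⟩ := mem_convexHull_iff_exists_fintype.mp hy
    choose w hw using hF
    simp only [← hw, F, Prod.fst_sum, Prod.snd_sum, Prod.smul_fst, Prod.smul_snd,
      Finset.sum_apply, Pi.smul_apply, smul_eq_mul, mul_sub, Finset.sum_sub_distrib,
      sub_neg] at hneg ⊢
    have ht : ∑ i, p i • (w i).2.1 ∈ T :=
      hT.sum_mem (fun i _ => hp i) hp1 fun i _ => (w i).2.2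
    refine sum_mul_le_of_forall_dilation_le hS hc hQ (fun z => hrob z _ ht) hp hp1 fun k => ?_
    simpa only [Finset.sum_apply, Pi.smul_apply, smul_eq_mul] using (hneg k).le
  obtain ⟨t₀, ht₀, ht₀pos⟩ := hTpos
  obtain ⟨lam, hlam, hbound⟩ := exists_lagrange_multipliers (convex_convexHull ℝ _) hfeas
    ⟨F (0, ⟨t₀, ht₀⟩), subset_convexHull ℝ _ ⟨_, rfl⟩, by simpa [F] using ht₀pos⟩
  refine ⟨lam, hlam, fun z t ht => ?_⟩
  have h : z ⬝ᵥ Q *ᵥ z + 2 * (q ⬝ᵥ z) - lam ⬝ᵥ ((fun k => z ⬝ᵥ S k *ᵥ z) - t) ≤ ξ :=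
    hbound _ (subset_convexHull ℝ _ ⟨(z, ⟨t, ht⟩), rfl⟩)
  rw [dotProduct_sub, ← dotProduct_sum_smul_mulVec] at h
  rw [sub_mulVec, dotProduct_sub]
  linarith

end ApproximateSLemma

section Ellitope

variable {n nb K : ℕ} {P : Matrix (Fin n) (Fin nb) ℝ} {S : Fin K → Matrix (Fin nb) (Fin nb) ℝ}
  {T : Set (Fin K → ℝ)}

lemma forall_mem_ellitope_quadratic_le_iff {s : ℝ} {X : Matrix (Fin n) (Fin n) ℝ}
    {x : Fin n → ℝ} {ξ : ℝ} :
    (∀ ζ ∈ ellitope P S T s, ζ ⬝ᵥ X *ᵥ ζ + 2 * (x ⬝ᵥ ζ) ≤ ξ) ↔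
      ∀ z, ∀ t ∈ T, (∀ k, z ⬝ᵥ S k *ᵥ z ≤ s * t k) →
        z ⬝ᵥ (Pᵀ * X * P) *ᵥ z + 2 * ((Pᵀ *ᵥ x) ⬝ᵥ z) ≤ ξ := by
  simp only [← mulVec_dotProduct_mulVec_mulVec, mulVec_transpose, ← dotProduct_mulVec]
  exact ⟨fun h z t ht hz => h _ ⟨z, t, ht, rfl, hz⟩,
    fun h ζ ⟨z, t, ht, hζ, hz⟩ => hζ ▸ h z t ht hz⟩

lemma suppFn_le {lam : Fin K → ℝ} {r : ℝ} (hT : T.Nonempty)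
    (h : ∀ t ∈ T, ∑ k, lam k * t k ≤ r) : suppFn T lam ≤ r :=
  csSup_le (hT.image _) (Set.forall_mem_image.mpr h)

theorem stmt5_general (hS : ∀ k, (S k).PosSemidef) (hTconv : Convex ℝ T)
    (hTpos : ∃ t ∈ T, ∀ k, 0 < t k) {ρ : ℝ} (hρ : 0 < ρ) {X : Matrix (Fin n) (Fin n) ℝ}
    (hX : X.IsSymm) {x : Fin n → ℝ} {ξ c : ℝ} (hc : √3 * (2 * K) < Real.exp (c / 3))
    (hrob : ∀ ζ ∈ ellitope P S T (c * ρ), ζ ⬝ᵥ X *ᵥ ζ + 2 * (x ⬝ᵥ ζ) ≤ ξ) :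
    ∃ lam : Fin K → ℝ, ∃ τ : ℝ, (∀ k, 0 ≤ lam k) ∧
      (Matrix.fromBlocks ((∑ k, lam k • S k) - Pᵀ * X * P)
        (Matrix.of fun i (_ : Unit) => -(Pᵀ *ᵥ x) i)
        (Matrix.of fun (_ : Unit) j => -(Pᵀ *ᵥ x) j)
        (Matrix.of fun _ _ => τ)).PosSemidef ∧
      BddAbove ((fun t => ∑ k, lam k * t k) '' T) ∧ ρ * suppFn T lam + τ ≤ ξ := by
  rw [forall_mem_ellitope_quadratic_le_iff] at hrob
  have hQ : (Pᵀ * X * P).IsHermitian :=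
    isHermitian_transpose_mul_mul (isHermitian_iff_isSymm.mpr hX) P
  obtain ⟨t₀, ht₀, ht₀pos⟩ := hTpos
  obtain ⟨lam, hlam, hdual⟩ := exists_multipliers_of_forall_dilation_le hS (by simpa using hc)
    hQ (hTconv.smul ρ) ⟨ρ • t₀, Set.smul_mem_smul_set ht₀, fun k => mul_pos hρ (ht₀pos k)⟩
    (by
      rintro z _ ⟨t, ht, rfl⟩ hz
      exact hrob z t ht fun k => (hz k).trans_eq (mul_assoc _ _ _).symm)
  have hM : (∑ k, lam k • S k - Pᵀ * X * P).IsHermitian :=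
    (isSelfAdjoint_sum _ fun k _ => (hS k).isHermitian.smul (IsSelfAdjoint.all (lam k))).sub hQ
  have hbound : ∀ u, ∀ t ∈ T, ∑ k, lam k * t k ≤
      (u ⬝ᵥ (∑ k, lam k • S k - Pᵀ * X * P) *ᵥ u - 2 * ((Pᵀ *ᵥ x) ⬝ᵥ u) + ξ) / ρ := by
    intro u t ht
    rw [le_div_iff₀' hρ, ← smul_eq_mul, ← dotProduct, ← dotProduct_smul]
    exact hdual u _ (Set.smul_mem_smul_set ht)
  refine ⟨lam, ξ - ρ * suppFn T lam, hlam, posSemidef_bordered (b := -(Pᵀ *ᵥ x)) hM fun u => ?_,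
    ⟨_, Set.forall_mem_image.mpr (hbound 0)⟩, by linarith⟩
  have hsup := suppFn_le ⟨t₀, ht₀⟩ (hbound u)
  rw [le_div_iff₀' hρ] at hsup
  rw [neg_dotProduct]
  linarith

end Ellitope

lemma sqrt_three_mul_two_mul_lt_exp_log {K : ℝ} (hK : 0 < K) :
    √3 * (2 * K) < Real.exp (3 * Real.log (6 * K) / 3) := by
  rw [mul_div_cancel_left₀ _ three_ne_zero, Real.exp_log (by positivity)]
  have h : √3 < 3 := (Real.sqrt_lt' three_pos).mpr (by norm_num)
  nlinarith

theorem stmt5 {n nb K : ℕ} (hK : 1 ≤ K)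
    (P : Matrix (Fin n) (Fin nb) ℝ)
    (S : Fin K → Matrix (Fin nb) (Fin nb) ℝ)
    (hS : ∀ k, (S k).PosSemidef)
    (hSsum : (∑ k, S k).PosDef)
    (T : Set (Fin K → ℝ))
    (hTne : T.Nonempty) (hTconv : Convex ℝ T) (hTcomp : IsCompact T)
    (hTnonneg : ∀ t ∈ T, ∀ k, 0 ≤ t k)
    (hTmono : ∀ t t' : Fin K → ℝ, (∀ k, 0 ≤ t k) → (∀ k, t k ≤ t' k) → t' ∈ T → t ∈ T)
    (hTpos : ∃ t ∈ T, ∀ k, 0 < t k)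
    (ρ : ℝ) (hρ : 0 < ρ)
    (X : Matrix (Fin n) (Fin n) ℝ) (hX : X.IsSymm) (x : Fin n → ℝ) (ξ : ℝ)
    (hrob : ∀ ζ ∈ ellitope P S T (3 * Real.log (6 * K) * ρ),
      ζ ⬝ᵥ X *ᵥ ζ + 2 * (x ⬝ᵥ ζ) ≤ ξ) :
    ∃ lam : Fin K → ℝ, ∃ τ : ℝ, (∀ k, 0 ≤ lam k) ∧
      (Matrix.fromBlocks ((∑ k, lam k • S k) - Pᵀ * X * P)
        (Matrix.of fun i (_ : Unit) => -(Pᵀ *ᵥ x) i)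
        (Matrix.of fun (_ : Unit) j => -(Pᵀ *ᵥ x) j)
        (Matrix.of fun _ _ => τ)).PosSemidef ∧
      ρ * suppFn T lam + τ ≤ ξ := by
  obtain ⟨lam, τ, hlam, hpsd, -, hle⟩ := stmt5_general hS hTconv hTpos hρ hX
    (sqrt_three_mul_two_mul_lt_exp_log (Nat.cast_pos.mpr hK)) hrob
  exact ⟨lam, τ, hlam, hpsd, hle⟩
end
end

section
/- Let K ≥ 1 be an integer, P a real n×n̄ matrix, and for each k ≤ K let f_k ≥ 1 and S^{k1},…,S^{k n̄} be symmetric f_k×f_k matrices defining S_k[z] = ∑_i z_i S^{ki}, such that z = 0 whenever S_k[z] = 0 for all k; let 𝒯 ⊆ ℝ_{≥0}^K be a nonempty convex compact monotone set containing a point with all coordinates positive, and ρ > 0. Let X be a symmetric n×n matrix, x ∈ ℝ^n, ξ ∈ ℝ. If there exist positive semidefinite Λ_k ∈ S^{f_k} (k = 1,…,K) and τ ∈ ℝ such that [[∑_k 𝒮_k^*[Λ_k] − PᵀXP, −Pᵀx],[−xᵀP, τ]] is positive semidefinite and ρ·φ_𝒯(λ[Λ]) + τ ≤ ξ, then for every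 ζ ∈ 𝒳[ρ] one has ζᵀXζ + 2xᵀζ ≤ ξ. -/
open Matrix BigOperators

noncomputable section

/-- The spectratope `𝒳[s]`: image under `z ↦ P z` of the set of `z` such that
`S_k[z]² ⪯ s t_k I` for some `t ∈ 𝒯`, where `S_k[z] = ∑ i z_i S^{ki}`. -/
def spectratope {n nb K : ℕ} (f : Fin K → ℕ) (P : Matrix (Fin n) (Fin nb) ℝ)
    (Smat : (k : Fin K) → Fin nb → Matrix (Fin (f k)) (Fin (f k)) ℝ)
    (T : Set (Fin K → ℝ)) (s : ℝ) : Set (Fin n → ℝ) :=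
  {x | ∃ z : Fin nb → ℝ, ∃ t ∈ T, x = P *ᵥ z ∧
    ∀ k, ((s * t k) • (1 : Matrix (Fin (f k)) (Fin (f k)) ℝ)
            - (∑ i, z i • Smat k i) ^ 2).PosSemidef}

/-- `𝒮_k^*[Λ]`, the matrix with entries `Tr(Λ (S^{ki} S^{kj} + S^{kj} S^{ki})/2)`. -/
def calSstar {nb fk : ℕ} (Sm : Fin nb → Matrix (Fin fk) (Fin fk) ℝ)
    (Λ : Matrix (Fin fk) (Fin fk) ℝ) : Matrix (Fin nb) (Fin nb) ℝ :=
  Matrix.of fun i j => (Λ * ((1 / 2 : ℝ) • (Sm i * Sm j + Sm j * Sm i))).trace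

/-- `λ[Λ] = (Tr Λ_1, …, Tr Λ_K)`. -/
def lamOf {K : ℕ} {f : Fin K → ℕ}
    (Λ : (k : Fin K) → Matrix (Fin (f k)) (Fin (f k)) ℝ) : Fin K → ℝ :=
  fun k => (Λ k).trace

/-!
Semidefiniteness of the block matrix, evaluated at `(z, 1)`, says
`zᵀPᵀXPz + 2xᵀPz ≤ ∑ₖ zᵀ𝒮ₖ^*[Λₖ]z + τ`. Each `zᵀ𝒮ₖ^*[Λₖ]z` equals `Tr(Λₖ Sₖ[z]²)`, which
`Λₖ ⪰ 0` and `Sₖ[z]² ⪯ ρ tₖ I` bound by `ρ tₖ Tr Λₖ`; the sum of these bounds is at most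
`ρ φ_𝒯(λ[Λ])`.
-/

section Trace

open scoped ComplexOrder

variable {𝕜 m : Type*} [RCLike 𝕜] [Fintype m] {A B : Matrix m m 𝕜}

open scoped MatrixOrder in
theorem trace_mul_nonneg_of_posSemidef (hA : A.PosSemidef) (hB : B.PosSemidef) :
    0 ≤ (A * B).trace := by
  classical
  obtain ⟨C, rfl⟩ := CStarAlgebra.nonneg_iff_eq_star_mul_self.mp hA.nonneg
  rw [star_eq_conjTranspose, Matrix.mul_assoc, trace_mul_comm]
  exact (hB.mul_mul_conjTranspose_same C).trace_nonneg

theorem trace_mul_le_mul_trace_of_posSemidef [DecidableEq m] {c : 𝕜} (hA : A.PosSemidef)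
    (hB : (c • (1 : Matrix m m 𝕜) - B).PosSemidef) : (A * B).trace ≤ c * A.trace := by
  have h := trace_mul_nonneg_of_posSemidef hA hB
  rwa [mul_sub, trace_sub, mul_smul_comm, mul_one, trace_smul, smul_eq_mul, sub_nonneg] at h

end Trace

section QuadraticForm

variable {R m n : Type*} [CommSemiring R] [Fintype m] [Fintype n]

theorem dotProduct_transpose_mul_mul_mulVec (P : Matrix n m R) (X : Matrix n n R) (w z : m → R) :
    w ⬝ᵥ (Pᵀ * X * P) *ᵥ z = (P *ᵥ w) ⬝ᵥ X *ᵥ (P *ᵥ z) := by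
  rw [← mulVec_mulVec, ← mulVec_mulVec, dotProduct_mulVec w, vecMul_transpose]

theorem sumElim_one_dotProduct_fromBlocks_mulVec (A : Matrix m m R) (b : m → R) (c : R)
    (z : m → R) :
    Sum.elim z 1 ⬝ᵥ
        fromBlocks A (of fun i (_ : Unit) => b i) (of fun (_ : Unit) j => b j)
          (of fun _ _ => c) *ᵥ Sum.elim z 1 =
      z ⬝ᵥ A *ᵥ z + 2 * (b ⬝ᵥ z) + c := by
  have col : (of fun i (_ : Unit) => b i) *ᵥ 1 = b := by
    ext
    simp [mulVec, dotProduct]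
  have row : (1 : Unit → R) ⬝ᵥ (of fun (_ : Unit) j => b j) *ᵥ z = b ⬝ᵥ z := by
    simp [mulVec, dotProduct]
  have corner : (1 : Unit → R) ⬝ᵥ (of fun (_ _ : Unit) => c) *ᵥ 1 = c := by
    simp [mulVec, dotProduct]
  rw [fromBlocks_mulVec, Sum.elim_comp_inl, Sum.elim_comp_inr, sumElim_dotProduct_sumElim,
    dotProduct_add, dotProduct_add, col, row, corner, dotProduct_comm z b]
  ring

end QuadraticForm

section CalSstar

variable {nb fk : ℕ} (Sm : Fin nb → Matrix (Fin fk) (Fin fk) ℝ) (Λ : Matrix (Fin fk) (Fin fk) ℝ)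

theorem dotProduct_calSstar_mulVec (w z : Fin nb → ℝ) :
    w ⬝ᵥ calSstar Sm Λ *ᵥ z =
      (Λ * ((1 / 2 : ℝ) • ((∑ i, w i • Sm i) * (∑ j, z j • Sm j) +
        (∑ j, z j • Sm j) * (∑ i, w i • Sm i)))).trace := by
  have anticommutator : (∑ i, w i • Sm i) * (∑ j, z j • Sm j) +
      (∑ j, z j • Sm j) * (∑ i, w i • Sm i) =
      ∑ i, ∑ j, (w i * z j) • (Sm i * Sm j + Sm j * Sm i) := by
    rw [Finset.sum_mul_sum, Finset.sum_mul_sum,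
      Finset.sum_comm (f := fun j i => z j • Sm j * w i • Sm i)]
    simp only [smul_mul_smul_comm, mul_comm (z _), smul_add, Finset.sum_add_distrib]
  rw [anticommutator]
  simp only [dotProduct, mulVec, calSstar, of_apply, Finset.mul_sum, Finset.smul_sum, trace_sum,
    smul_comm (1 / 2 : ℝ), mul_smul_comm _ Λ, trace_smul, smul_eq_mul, mul_assoc, mul_comm (z _)]

theorem dotProduct_calSstar_mulVec_self (z : Fin nb → ℝ) :
    z ⬝ᵥ calSstar Sm Λ *ᵥ z = (Λ * (∑ i, z i • Sm i) ^ 2).trace := by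
  rw [dotProduct_calSstar_mulVec, ← pow_two, ← two_smul ℝ, smul_smul]
  norm_num

end CalSstar

section Spectratope

variable {n nb K : ℕ} {f : Fin K → ℕ} {P : Matrix (Fin n) (Fin nb) ℝ}
  {Smat : (k : Fin K) → Fin nb → Matrix (Fin (f k)) (Fin (f k)) ℝ} {T : Set (Fin K → ℝ)}

theorem sum_mul_le_suppFn (hT : BddAbove T) {lam : Fin K → ℝ} (hlam : 0 ≤ lam) {t : Fin K → ℝ}
    (ht : t ∈ T) : ∑ k, lam k * t k ≤ suppFn T lam := by
  have mono : Monotone fun t : Fin K → ℝ => ∑ k, lam k * t k := fun _ _ h =>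
    Finset.sum_le_sum fun k _ => mul_le_mul_of_nonneg_left (h k) (hlam k)
  exact le_csSup (mono.map_bddAbove hT) (Set.mem_image_of_mem _ ht)

theorem dotProduct_sum_calSstar_mulVec_le {s : ℝ} (hs : 0 ≤ s) (hT : BddAbove T)
    {Λ : (k : Fin K) → Matrix (Fin (f k)) (Fin (f k)) ℝ} (hΛ : ∀ k, (Λ k).PosSemidef)
    {t : Fin K → ℝ} (ht : t ∈ T) {z : Fin nb → ℝ}
    (hz : ∀ k, ((s * t k) • (1 : Matrix (Fin (f k)) (Fin (f k)) ℝ)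
      - (∑ i, z i • Smat k i) ^ 2).PosSemidef) :
    z ⬝ᵥ (∑ k, calSstar (Smat k) (Λ k)) *ᵥ z ≤ s * suppFn T (lamOf Λ) :=
  calc z ⬝ᵥ (∑ k, calSstar (Smat k) (Λ k)) *ᵥ z
      = ∑ k, (Λ k * (∑ i, z i • Smat k i) ^ 2).trace := by
        rw [sum_mulVec, dotProduct_sum]
        simp only [dotProduct_calSstar_mulVec_self]
    _ ≤ ∑ k, s * t k * (Λ k).trace :=
        Finset.sum_le_sum fun k _ => trace_mul_le_mul_trace_of_posSemidef (hΛ k) (hz k)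
    _ = s * ∑ k, lamOf Λ k * t k := by
        simp only [lamOf, Finset.mul_sum, mul_assoc, mul_comm (t _)]
    _ ≤ s * suppFn T (lamOf Λ) :=
        mul_le_mul_of_nonneg_left (sum_mul_le_suppFn hT (fun k => (hΛ k).trace_nonneg) ht) hs

theorem stmt6_general (hT : BddAbove T) {ρ : ℝ} (hρ : 0 ≤ ρ) {X : Matrix (Fin n) (Fin n) ℝ}
    {x : Fin n → ℝ} {ξ τ : ℝ} {Λ : (k : Fin K) → Matrix (Fin (f k)) (Fin (f k)) ℝ}
    (hΛ : ∀ k, (Λ k).PosSemidef)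
    (hM : (fromBlocks ((∑ k, calSstar (Smat k) (Λ k)) - Pᵀ * X * P)
      (of fun i (_ : Unit) => -(Pᵀ *ᵥ x) i)
      (of fun (_ : Unit) j => -(Pᵀ *ᵥ x) j)
      (of fun _ _ => τ)).PosSemidef)
    (hξ : ρ * suppFn T (lamOf Λ) + τ ≤ ξ) :
    ∀ ζ ∈ spectratope f P Smat T ρ, ζ ⬝ᵥ X *ᵥ ζ + 2 * (x ⬝ᵥ ζ) ≤ ξ := by
  rintro _ ⟨z, t, ht, rfl, hz⟩
  have trace_bound := dotProduct_sum_calSstar_mulVec_le hρ hT hΛ ht hz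
  have form_nonneg : 0 ≤ z ⬝ᵥ ((∑ k, calSstar (Smat k) (Λ k)) - Pᵀ * X * P) *ᵥ z +
      2 * (-(Pᵀ *ᵥ x) ⬝ᵥ z) + τ :=
    (hM.dotProduct_mulVec_nonneg (Sum.elim z 1)).trans_eq
      (sumElim_one_dotProduct_fromBlocks_mulVec _ (-(Pᵀ *ᵥ x)) τ z)
  have cross : -(Pᵀ *ᵥ x) ⬝ᵥ z = -(x ⬝ᵥ P *ᵥ z) := by
    rw [neg_dotProduct, mulVec_transpose, dotProduct_mulVec]
  rw [sub_mulVec, dotProduct_sub, dotProduct_transpose_mul_mul_mulVec, cross] at form_nonneg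
  linarith

end Spectratope

theorem stmt6 {n nb K : ℕ} (hK : 1 ≤ K)
    (P : Matrix (Fin n) (Fin nb) ℝ)
    (f : Fin K → ℕ) (hf : ∀ k, 1 ≤ f k)
    (Smat : (k : Fin K) → Fin nb → Matrix (Fin (f k)) (Fin (f k)) ℝ)
    (hSm : ∀ k i, (Smat k i).IsSymm)
    (hnd : ∀ z : Fin nb → ℝ, (∀ k, (∑ i, z i • Smat k i) = 0) → z = 0)
    (T : Set (Fin K → ℝ))
    (hTne : T.Nonempty) (hTconv : Convex ℝ T) (hTcomp : IsCompact T)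
    (hTnonneg : ∀ t ∈ T, ∀ k, 0 ≤ t k)
    (hTmono : ∀ t t' : Fin K → ℝ, (∀ k, 0 ≤ t k) → (∀ k, t k ≤ t' k) → t' ∈ T → t ∈ T)
    (hTpos : ∃ t ∈ T, ∀ k, 0 < t k)
    (ρ : ℝ) (hρ : 0 < ρ)
    (X : Matrix (Fin n) (Fin n) ℝ) (hX : X.IsSymm) (x : Fin n → ℝ) (ξ : ℝ)
    (hfeas : ∃ Λ : (k : Fin K) → Matrix (Fin (f k)) (Fin (f k)) ℝ, ∃ τ : ℝ,
      (∀ k, (Λ k).PosSemidef) ∧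
      (Matrix.fromBlocks ((∑ k, calSstar (Smat k) (Λ k)) - Pᵀ * X * P)
        (Matrix.of fun i (_ : Unit) => -(Pᵀ *ᵥ x) i)
        (Matrix.of fun (_ : Unit) j => -(Pᵀ *ᵥ x) j)
        (Matrix.of fun _ _ => τ)).PosSemidef ∧
      ρ * suppFn T (lamOf Λ) + τ ≤ ξ) :
    ∀ ζ ∈ spectratope f P Smat T ρ, ζ ⬝ᵥ X *ᵥ ζ + 2 * (x ⬝ᵥ ζ) ≤ ξ := by
  obtain ⟨Λ, τ, hΛ, hM, hξ⟩ := hfeas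
  exact stmt6_general hTcomp.isBounded.bddAbove hρ.le hΛ hM hξ
end
end

section
/- Let K ≥ 1 be an integer, P a real n×n̄ matrix, and for each k ≤ K let f_k ≥ 1 and S^{k1},…,S^{k n̄} be symmetric f_k×f_k matrices defining S_k[z] = ∑_i z_i S^{ki}, such that z = 0 whenever S_k[z] = 0 for all k; let 𝒯 ⊆ ℝ_{≥0}^K be a nonempty convex compact monotone set containing a point with all coordinates positive, and ρ > 0. Let X be a symmetric n×n matrix, x ∈ ℝ^n, ξ ∈ ℝ, and set κ = 2·ln(8·(f_1+⋯+f_K)). If ζᵀXζ + 2xᵀζ ≤ ξ holds for every ζ ∈ 𝒳[κ·ρ], then there exist positive semidefinite Λ_k ∈ S^{f_k} (k = 1,…,K) and τ ∈ ℝ such that [[∑_k 𝒮_k^*[Λ_k] − PᵀXP, −Pᵀx],[−xᵀP, τ]] is positive semidefinite and ρ·φ_𝒯(λ[Λ]) + τ ≤ ξ. -/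
open Matrix BigOperators

noncomputable section

/-! By Lagrange duality the certificate exists as soon as `Tr (M Y) ≤ ξ` for every `Y ⪰ 0` with
`Y i₀ i₀ ≤ 1` and `𝒮_k[Y] ≺ ρ t_k I` for some `t ∈ 𝒯`, where `M` is the matrix of the homogenized
form and `i₀` its last coordinate. Such a `Y` is rounded at random: factor it as `G Gᵀ` with
`Gᵀ M G` diagonal, so that the form takes the value `Tr (M Y)` at every signed sum of the columns of
`G`. By the matrix Khintchine inequality a random signed sum `v` violates some `S_k[v]² ⪯ c ρ t_k I`
with probability at most `2 (∑ f_k) exp (-c / 2)`, which is less than `1 / 3` for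
`c > 2 log (6 ∑ f_k)`, while `|v i₀| ≤ 1` has probability at least `1 / 3`. Hence some `v` satisfies
all these constraints, and the symmetry of the spectratope takes care of `|v i₀| < 1`. -/

section RademacherSums

variable {ι E : Type*} [Fintype ι] [AddCommGroup E]

/-- The Rademacher sum `∑ i, ε i • A i`. Sign patterns `ε : ι → ℤˣ` carry the uniform probability,
so expectations over them are averages `𝔼 ε`. -/
def signSum (A : ι → E) (ε : ι → ℤˣ) : E := ∑ i, ε i • A i

lemma signSum_neg (A : ι → E) (ε : ι → ℤˣ) : signSum A (-ε) = -signSum A ε := by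
  simp [signSum, Units.smul_def]

lemma map_signSum {F Φ : Type*} [AddCommGroup F] [FunLike Φ E F] [AddMonoidHomClass Φ E F] (φ : Φ)
    (A : ι → E) (ε : ι → ℤˣ) : φ (signSum A ε) = signSum (fun i => φ (A i)) ε := by
  simp only [signSum, map_sum, Units.smul_def, map_zsmul]

section FlipSign

variable {ι : Type*} [DecidableEq ι]

/-- The flip of the `i`-th sign, as a permutation of the sign patterns. -/
def flipSign (i : ι) : Equiv.Perm (ι → ℤˣ) := Equiv.mulRight (Pi.mulSingle i (-1))

lemma flipSign_apply_self (i : ι) (ε : ι → ℤˣ) : flipSign i ε i = -ε i := by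
  simp [flipSign]

lemma flipSign_apply_of_ne {i j : ι} (h : j ≠ i) (ε : ι → ℤˣ) : flipSign i ε j = ε j := by
  simp [flipSign, Pi.mulSingle_eq_of_ne h]

end FlipSign

variable [DecidableEq ι]

open Classical in
/-- The probability of an event under independent uniform signs. -/
def signProb (p : (ι → ℤˣ) → Prop) : ℝ := 𝔼 ε, if p ε then 1 else 0

lemma signSum_sub_signSum_flipSign (A : ι → E) (i : ι) (ε : ι → ℤˣ) :
    signSum A ε - signSum A (flipSign i ε) = 2 • ε i • A i := by
  rw [signSum, signSum, ← Finset.sum_sub_distrib, Finset.sum_eq_single i]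
  · rw [flipSign_apply_self, Units.neg_smul, sub_neg_eq_add, two_nsmul]
  · intro j _ hj
    rw [flipSign_apply_of_ne hj, sub_self]
  · simp

lemma two_mul_expect_sign_smul (i : ι) (g : (ι → ℤˣ) → ℝ) :
    2 * 𝔼 ε, ε i • g ε = 𝔼 ε, ε i • (g ε - g (flipSign i ε)) := by
  have h : 𝔼 ε, -(ε i • g (flipSign i ε)) = 𝔼 ε, ε i • g ε :=
    Fintype.expect_equiv (flipSign i) _ _ fun ε => by
      rw [flipSign_apply_self, Units.neg_smul]
  rw [Finset.expect_neg_distrib] at h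
  simp only [smul_sub, Finset.expect_sub_distrib]
  linarith

lemma expect_signSum_sq (b : ι → ℝ) : 𝔼 ε, signSum b ε ^ 2 = ∑ i, b i ^ 2 := by
  have key (i : ι) : 𝔼 ε, ε i • (b i * signSum b ε) = b i ^ 2 := by
    have h := two_mul_expect_sign_smul i fun ε => b i * signSum b ε
    simp only [← mul_sub, signSum_sub_signSum_flipSign, mul_smul_comm, smul_smul,
      Int.units_mul_self, one_smul, Fintype.expect_const, nsmul_eq_mul] at h
    push_cast at h
    linarith
  calc 𝔼 ε, signSum b ε ^ 2
      = 𝔼 ε, ∑ i, ε i • (b i * signSum b ε) := by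
        refine Finset.expect_congr rfl fun ε _ => ?_
        simp only [← smul_mul_assoc, ← Finset.sum_mul, sq]
        rfl
    _ = ∑ i, b i ^ 2 := by
        rw [Finset.expect_sum_comm]
        exact Finset.sum_congr rfl fun i _ => key i

lemma mul_signProb_le_expect {p : (ι → ℤˣ) → Prop} {f : (ι → ℤˣ) → ℝ} {c : ℝ}
    (hf : ∀ ε, 0 ≤ f ε) (hpf : ∀ ε, p ε → c ≤ f ε) : c * signProb p ≤ 𝔼 ε, f ε := by
  rw [signProb, Finset.mul_expect]
  refine Finset.expect_le_expect fun ε _ => ?_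
  split_ifs with h
  · simpa using hpf ε h
  · simpa using hf ε

lemma signProb_mono {p q : (ι → ℤˣ) → Prop} (h : ∀ ε, p ε → q ε) : signProb p ≤ signProb q :=
  Finset.expect_le_expect fun ε _ => by
    have := h ε
    split_ifs <;> simp_all

lemma signProb_add_signProb_not (p : (ι → ℤˣ) → Prop) :
    signProb p + signProb (fun ε => ¬p ε) = 1 := by
  simp only [signProb, ← Finset.expect_add_distrib]
  refine (Finset.expect_congr rfl fun ε _ => ?_).trans (Fintype.expect_const (1 : ℝ))
  by_cases hp : p ε <;> simp [hp]

lemma signProb_or_le (p q : (ι → ℤˣ) → Prop) :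
    signProb (fun ε => p ε ∨ q ε) ≤ signProb p + signProb q := by
  simp only [signProb, ← Finset.expect_add_distrib]
  refine Finset.expect_le_expect fun ε _ => ?_
  by_cases hp : p ε <;> by_cases hq : q ε <;> simp [hp, hq]

lemma signProb_exists_le {κ : Type*} [Fintype κ] (p : κ → (ι → ℤˣ) → Prop) :
    signProb (fun ε => ∃ k, p k ε) ≤ ∑ k, signProb (p k) := by
  classical
  simp only [signProb, ← Finset.expect_sum_comm]
  refine Finset.expect_le_expect fun ε _ => ?_
  have hnonneg (k : κ) : 0 ≤ if p k ε then (1 : ℝ) else 0 := by split_ifs <;> norm_num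
  split_ifs with h
  · obtain ⟨k, hk⟩ := h
    simpa [hk] using Finset.single_le_sum (fun j _ => hnonneg j) (Finset.mem_univ k)
  · exact Finset.sum_nonneg fun k _ => hnonneg k

lemma signProb_comp_neg (p : (ι → ℤˣ) → Prop) : signProb (fun ε => p (-ε)) = signProb p :=
  Fintype.expect_equiv (Equiv.neg _) _ _ fun _ => rfl

lemma signProb_signSum_split (b : ι → ℝ) (i : ι) (p : ℝ → Prop) :
    signProb (fun ε => p (signSum b ε)) =
      𝔼 u : ℤˣ, signProb fun ε => p (u • b i + signSum (fun j : {j // j ≠ i} => b j) ε) := by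
  have hsum (ε : ι → ℤˣ) :
      signSum b ε = ε i • b i + signSum (fun j : {j // j ≠ i} => b j) (fun j => ε j) := by
    rw [signSum, Fintype.sum_eq_add_sum_subtype_ne _ i]
    rfl
  simp only [signProb]
  rw [← Finset.expect_product', Finset.univ_product_univ]
  classical
  exact Fintype.expect_equiv (Equiv.funSplitAt i ℤˣ) _ _ fun ε =>
    if_congr (by rw [hsum]; rfl) rfl rfl

end RademacherSums

section OneThird

lemma abs_intUnit_smul (u : ℤˣ) (a : ℝ) : |u • a| = |a| := by
  rcases Int.units_eq_one_or u with rfl | rfl <;> simp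

variable {ι : Type*} [Fintype ι] [DecidableEq ι]

lemma one_third_le_signProb_of_one_lt (b : ι → ℝ) {s h : ℝ} (hs : |s| ≤ 1) (hsh : 1 < |s| + h)
    (hb : ∑ i, b i ^ 2 ≤ 1 - h ^ 2) : 1 / 3 ≤ signProb fun ε => |s + signSum b ε| ≤ 1 := by
  wlog hs0 : 0 ≤ s generalizing s
  · have := this (s := -s) (by simpa) (by simpa) (by linarith)
    rw [← signProb_comp_neg] at this
    simpa only [signSum_neg, ← neg_add, abs_neg] using this
  rw [abs_of_nonneg hs0] at hs hsh
  have hh1 : h ≤ 1 := by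
    have : 0 ≤ ∑ i, b i ^ 2 := Finset.sum_nonneg fun i _ => sq_nonneg _
    nlinarith
  have hcheb : (2 - h) ^ 2 * signProb (fun ε => ¬|signSum b ε| ≤ 2 - h) ≤ 1 - h ^ 2 := by
    refine (mul_signProb_le_expect (fun ε => sq_nonneg (signSum b ε)) fun ε hε => ?_).trans
      ((expect_signSum_sq b).trans_le hb)
    rw [← sq_abs (signSum b ε)]
    exact pow_le_pow_left₀ (by linarith) (not_le.1 hε).le 2
  have hthird : signProb (fun ε => ¬|signSum b ε| ≤ 2 - h) ≤ 1 / 3 := by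
    refine le_of_mul_le_mul_left (hcheb.trans ?_) (by nlinarith : 0 < (2 - h) ^ 2)
    nlinarith [sq_nonneg (2 * h - 1)]
  have hcover : signProb (fun ε => |signSum b ε| ≤ 2 - h) ≤
      signProb (fun ε => |s + signSum b ε| ≤ 1 ∨ |s + signSum b (-ε)| ≤ 1) := by
    refine signProb_mono fun ε hε => ?_
    simp only [signSum_neg, abs_le] at hε ⊢
    rcases le_total 0 (signSum b ε) with h0 | h0
    · right; constructor <;> linarith
    · left; constructor <;> linarith
  have hor := signProb_or_le (fun ε => |s + signSum b ε| ≤ 1) fun ε => |s + signSum b (-ε)| ≤ 1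
  rw [signProb_comp_neg fun ε => |s + signSum b ε| ≤ 1] at hor
  linarith [signProb_add_signProb_not fun ε => |signSum b ε| ≤ 2 - h]

lemma one_third_le_signProb_of_sum_sq_le_one_sub_sq (b : ι → ℝ) {s : ℝ} (hs : |s| ≤ 1)
    (hb : ∀ i, ∑ j, b j ^ 2 ≤ 1 - b i ^ 2) :
    1 / 3 ≤ signProb fun ε => |s + signSum b ε| ≤ 1 := by
  induction hn : Fintype.card ι generalizing ι s with
  | zero =>
    have := Fintype.card_eq_zero_iff.1 hn
    simp [signProb, signSum, hs]
    norm_num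
  | succ n ih =>
    obtain ⟨i⟩ : Nonempty ι := Fintype.card_pos_iff.1 (by omega)
    by_cases hsh : 1 < |s| + |b i|
    · exact one_third_le_signProb_of_one_lt b hs hsh (by simpa only [sq_abs] using hb i)
    · rw [signProb_signSum_split b i fun r => |s + r| ≤ 1]
      refine Finset.le_expect Finset.univ_nonempty fun u _ => ?_
      simp only [← add_assoc]
      refine ih _ ?_ (fun j => ?_) (by simp [Fintype.card_subtype_compl, hn])
      · exact (abs_add_le _ _).trans (by rwa [abs_intUnit_smul, ← not_lt])
      · have := hb j
        rw [Fintype.sum_eq_add_sum_subtype_ne _ i] at this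
        nlinarith [sq_nonneg (b i)]

/-- Peel off the largest coefficient first: the remaining ones then satisfy
`∑ j, b j ^ 2 ≤ 1 - b i ^ 2` for every `i`, which is stable under removing further ones. -/
theorem one_third_le_signProb_abs_signSum_le_one (b : ι → ℝ) (hb : ∑ i, b i ^ 2 ≤ 1) :
    1 / 3 ≤ signProb fun ε => |signSum b ε| ≤ 1 := by
  rcases isEmpty_or_nonempty ι with hι | hι
  · simp [signProb, signSum]
    norm_num
  obtain ⟨i, hi⟩ := Finite.exists_max fun j => |b j|
  rw [Fintype.sum_eq_add_sum_subtype_ne _ i] at hb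
  have htail : 0 ≤ ∑ j : {j // j ≠ i}, b j ^ 2 := Finset.sum_nonneg fun _ _ => sq_nonneg _
  rw [signProb_signSum_split b i fun r => |r| ≤ 1]
  refine Finset.le_expect Finset.univ_nonempty fun u _ => ?_
  refine one_third_le_signProb_of_sum_sq_le_one_sub_sq _ ?_ fun j => ?_
  · rw [abs_intUnit_smul, ← sq_le_one_iff_abs_le_one]
    linarith
  · linarith [sq_le_sq.2 (hi j)]

end OneThird

section MatrixMoments

lemma pow_mul_pow_add_le (a b : ℝ) {q r : ℕ} (hqr : Even (q + r)) :
    a ^ q * b ^ r + a ^ r * b ^ q ≤ a ^ (q + r) + b ^ (q + r) := by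
  have habs (n k : ℕ) : a ^ n * b ^ k ≤ |a| ^ n * |b| ^ k := by
    rw [← abs_pow, ← abs_pow, ← abs_mul]
    exact le_abs_self _
  have hmono : 0 ≤ (|a| ^ q - |b| ^ q) * (|a| ^ r - |b| ^ r) := by
    rcases le_total |a| |b| with h | h
    · exact mul_nonneg_of_nonpos_of_nonpos (sub_nonpos.2 (by gcongr)) (sub_nonpos.2 (by gcongr))
    · exact mul_nonneg (sub_nonneg.2 (by gcongr)) (sub_nonneg.2 (by gcongr))
  rw [← hqr.pow_abs a, ← hqr.pow_abs b, pow_add, pow_add]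
  linarith [habs q r, habs r q]

lemma pow_succ_sub_pow_succ_eq_sum {R : Type*} [Ring R] (x y : R) (n : ℕ) :
    x ^ (n + 1) - y ^ (n + 1) = ∑ q ∈ Finset.range (n + 1), x ^ q * (x - y) * y ^ (n - q) := by
  induction n with
  | zero => simp
  | succ n ih =>
    have hshift : ∑ q ∈ Finset.range (n + 1), x ^ q * (x - y) * y ^ (n + 1 - q) =
        (∑ q ∈ Finset.range (n + 1), x ^ q * (x - y) * y ^ (n - q)) * y := by
      rw [Finset.sum_mul]
      refine Finset.sum_congr rfl fun q hq => ?_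
      rw [Nat.succ_sub (Nat.lt_succ_iff.1 (Finset.mem_range.1 hq)), pow_succ, ← mul_assoc]
    rw [Finset.sum_range_succ, hshift, ← ih]
    simp only [Nat.sub_self, pow_zero, mul_one, mul_sub, sub_mul, ← pow_succ]
    abel

variable {m : Type*} [Fintype m]

open scoped MatrixOrder in
lemma exists_eq_conjTranspose_mul_self {B : Matrix m m ℝ} (hB : B.PosSemidef) :
    ∃ C : Matrix m m ℝ, B = Cᴴ * C := by
  classical
  exact CStarAlgebra.nonneg_iff_eq_star_mul_self.1 hB.nonneg

lemma trace_mul_nonneg {A B : Matrix m m ℝ} (hA : A.PosSemidef) (hB : B.PosSemidef) :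
    0 ≤ (A * B).trace := by
  obtain ⟨C, rfl⟩ := exists_eq_conjTranspose_mul_self hB
  rw [← Matrix.mul_assoc, trace_mul_comm, ← Matrix.mul_assoc]
  exact (hA.mul_mul_conjTranspose_same C).trace_nonneg

variable [DecidableEq m]

lemma posSemidef_pow_of_even {W : Matrix m m ℝ} (hW : W.IsHermitian) {p : ℕ} (hp : Even p) :
    (W ^ p).PosSemidef := by
  obtain ⟨k, rfl⟩ := hp
  rw [pow_add]
  nth_rewrite 1 [← (hW.pow k).eq]
  exact posSemidef_conjTranspose_mul_self _

lemma isHermitian_pow_eq {W : Matrix m m ℝ} (hW : W.IsHermitian) (q : ℕ) :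
    W ^ q = hW.eigenvectorUnitary * diagonal (fun i => hW.eigenvalues i ^ q) *
      (hW.eigenvectorUnitary : Matrix m m ℝ)ᴴ := by
  conv_lhs => rw [hW.spectral_theorem, ← map_pow, diagonal_pow]
  rfl

lemma trace_pow_eq_sum_eigenvalues_pow {W : Matrix m m ℝ} (hW : W.IsHermitian) (q : ℕ) :
    (W ^ q).trace = ∑ i, hW.eigenvalues i ^ q := by
  rw [isHermitian_pow_eq hW, trace_mul_comm, ← Matrix.mul_assoc, ← star_eq_conjTranspose,
    Unitary.coe_star_mul_self, Matrix.one_mul, trace_diagonal]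

lemma posSemidef_smul_one_sub_sq {W : Matrix m m ℝ} (hW : W.IsHermitian) {c : ℝ}
    (hc : ∀ i, hW.eigenvalues i ^ 2 ≤ c) : (c • (1 : Matrix m m ℝ) - W ^ 2).PosSemidef := by
  have h : c • (1 : Matrix m m ℝ) - W ^ 2 = hW.eigenvectorUnitary *
      diagonal (fun i => c - hW.eigenvalues i ^ 2) * (hW.eigenvectorUnitary : Matrix m m ℝ)ᴴ := by
    rw [← diagonal_sub, ← smul_one_eq_diagonal, Matrix.mul_sub, Matrix.sub_mul,
      ← isHermitian_pow_eq, Matrix.mul_smul, Matrix.mul_one, Matrix.smul_mul,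
      ← star_eq_conjTranspose, Unitary.mul_star_self_of_mem hW.eigenvectorUnitary.2]
  rw [h]
  exact (PosSemidef.diagonal fun i => sub_nonneg.2 (hc i)).mul_mul_conjTranspose_same _

lemma trace_mul_diagonal_mul_conjTranspose_mul_diagonal (B : Matrix m m ℝ) (d e : m → ℝ) :
    (B * diagonal d * Bᴴ * diagonal e).trace = ∑ i, ∑ j, B i j ^ 2 * (d j * e i) := by
  simp only [trace, diag_apply, mul_diagonal]
  refine Finset.sum_congr rfl fun i _ => ?_
  rw [Matrix.mul_apply, Finset.sum_mul]
  refine Finset.sum_congr rfl fun j _ => ?_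
  rw [mul_diagonal, conjTranspose_apply, star_trivial]
  ring

/-- In eigenbases of `W` and `Y` this reduces to the scalar inequality `pow_mul_pow_add_le`. -/
lemma trace_mul_pow_mul_pow_add_le {H W Y : Matrix m m ℝ} (hH : H.IsHermitian)
    (hW : W.IsHermitian) (hY : Y.IsHermitian) {q r : ℕ} (hqr : Even (q + r)) :
    (H * W ^ q * H * Y ^ r).trace + (H * W ^ r * H * Y ^ q).trace ≤
      (H * H * W ^ (q + r)).trace + (H * H * Y ^ (q + r)).trace := by
  obtain ⟨B, hB⟩ : ∃ B : Matrix m m ℝ, ∀ a c : ℕ, (H * W ^ a * H * Y ^ c).trace =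
      ∑ i, ∑ j, B i j ^ 2 * (hW.eigenvalues j ^ a * hY.eigenvalues i ^ c) := by
    refine ⟨(hY.eigenvectorUnitary : Matrix m m ℝ)ᴴ * H * hW.eigenvectorUnitary, fun a c => ?_⟩
    rw [isHermitian_pow_eq hW, isHermitian_pow_eq hY,
      ← trace_mul_diagonal_mul_conjTranspose_mul_diagonal, conjTranspose_mul, conjTranspose_mul,
      conjTranspose_conjTranspose, hH.eq, ← Matrix.mul_assoc _ _ (_ᴴ), trace_mul_comm]
    simp only [Matrix.mul_assoc]
  have hleft := hB (q + r) 0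
  have hright := hB 0 (q + r)
  simp only [pow_zero, mul_one, one_mul] at hleft hright
  rw [trace_mul_comm, ← Matrix.mul_assoc] at hleft
  rw [hleft, hright, hB, hB]
  simp only [← Finset.sum_add_distrib, ← mul_add]
  exact Finset.sum_le_sum fun i _ => Finset.sum_le_sum fun j _ =>
    mul_le_mul_of_nonneg_left (pow_mul_pow_add_le _ _ hqr) (sq_nonneg _)

lemma two_mul_sum_trace_mul_pow_le {H W Y : Matrix m m ℝ} (hH : H.IsHermitian)
    (hW : W.IsHermitian) (hY : Y.IsHermitian) {n : ℕ} (hn : Even n) :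
    2 * ∑ q ∈ Finset.range (n + 1), (H * W ^ q * H * Y ^ (n - q)).trace ≤
      (n + 1) * ((H * H * W ^ n).trace + (H * H * Y ^ n).trace) := by
  have hrefl : ∑ q ∈ Finset.range (n + 1), (H * W ^ (n - q) * H * Y ^ q).trace =
      ∑ q ∈ Finset.range (n + 1), (H * W ^ q * H * Y ^ (n - q)).trace := by
    rw [← Finset.sum_range_reflect]
    refine Finset.sum_congr rfl fun q hq => ?_
    rw [add_tsub_cancel_right, Nat.sub_sub_self (Finset.mem_range_succ_iff.1 hq)]
  calc 2 * ∑ q ∈ Finset.range (n + 1), (H * W ^ q * H * Y ^ (n - q)).trace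
      = ∑ q ∈ Finset.range (n + 1), ((H * W ^ q * H * Y ^ (n - q)).trace +
          (H * W ^ (n - q) * H * Y ^ q).trace) := by
        rw [Finset.sum_add_distrib, hrefl, two_mul]
    _ ≤ ∑ _q ∈ Finset.range (n + 1), ((H * H * W ^ n).trace + (H * H * Y ^ n).trace) := by
        refine Finset.sum_le_sum fun q hq => ?_
        have hqn := Nat.add_sub_of_le (Finset.mem_range_succ_iff.1 hq)
        have h := trace_mul_pow_mul_pow_add_le hH hW hY (hqn.symm ▸ hn)
        rwa [hqn] at h
    _ = (n + 1) * ((H * H * W ^ n).trace + (H * H * Y ^ n).trace) := by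
        rw [Finset.sum_const, Finset.card_range, nsmul_eq_mul, Nat.cast_succ]

end MatrixMoments

section MatrixKhintchine

lemma expect_sum_cosh_le {Ω m : Type*} [Fintype Ω] [Fintype m] {d : Ω → m → ℝ} {c s : ℝ}
    (h : ∀ p : ℕ, (𝔼 ω, ∑ j, d ω j ^ (2 * p)) / (2 * p).factorial ≤ c * (s ^ p / p.factorial)) :
    𝔼 ω, ∑ j, Real.cosh (d ω j) ≤ c * Real.exp s := by
  have hcosh : HasSum (fun p : ℕ => (𝔼 ω, ∑ j, d ω j ^ (2 * p)) / (2 * p).factorial)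
      (𝔼 ω, ∑ j, Real.cosh (d ω j)) := by
    simp only [Fintype.expect_eq_sum_div_card, div_right_comm _ (Fintype.card Ω : ℝ),
      Finset.sum_div]
    exact hasSum_sum fun ω _ => hasSum_sum fun j _ => (Real.hasSum_cosh _).div_const _
  have hexp : HasSum (fun p : ℕ => c * (s ^ p / p.factorial)) (c * Real.exp s) := by
    rw [Real.exp_eq_exp_ℝ]
    exact (NormedSpace.expSeries_div_hasSum_exp s).mul_left c
  exact hasSum_le h hcosh hexp

variable {m ι : Type*} [Fintype ι]

lemma isHermitian_signSum {A : ι → Matrix m m ℝ} (hA : ∀ i, (A i).IsHermitian) (ε : ι → ℤˣ) :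
    (signSum A ε).IsHermitian := by
  simp only [signSum, Matrix.IsHermitian, conjTranspose_sum, Units.smul_def, conjTranspose_zsmul,
    (hA _).eq]

variable [Fintype m] [DecidableEq m] [DecidableEq ι]

lemma expect_sign_smul_trace_mul_pow_le {A : ι → Matrix m m ℝ} (hA : ∀ i, (A i).IsHermitian)
    (i : ι) {n : ℕ} (hn : Even n) :
    𝔼 ε, ε i • (A i * signSum A ε ^ (n + 1)).trace ≤
      (n + 1) * 𝔼 ε, (A i * A i * signSum A ε ^ n).trace := by
  have hflip (ε : ι → ℤˣ) : ε i • ((A i * signSum A ε ^ (n + 1)).trace -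
      (A i * signSum A (flipSign i ε) ^ (n + 1)).trace) ≤
      (n + 1) * ((A i * A i * signSum A ε ^ n).trace +
        (A i * A i * signSum A (flipSign i ε) ^ n).trace) := by
    refine le_of_eq_of_le ?_ (two_mul_sum_trace_mul_pow_le (hA i) (isHermitian_signSum hA ε)
      (isHermitian_signSum hA (flipSign i ε)) hn)
    rw [← trace_sub, ← Matrix.mul_sub, pow_succ_sub_pow_succ_eq_sum, Finset.mul_sum, trace_sum,
      Finset.smul_sum, Finset.mul_sum]
    refine Finset.sum_congr rfl fun q _ => ?_
    rw [signSum_sub_signSum_flipSign, ← trace_smul]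
    simp only [mul_smul_comm, smul_mul_assoc, smul_comm (ε i) 2, smul_smul (ε i),
      Int.units_mul_self, one_smul, trace_smul, ← Matrix.mul_assoc]
    rw [nsmul_eq_mul, Nat.cast_ofNat]
  have hperm : 𝔼 ε, (A i * A i * signSum A (flipSign i ε) ^ n).trace =
      𝔼 ε, (A i * A i * signSum A ε ^ n).trace :=
    Fintype.expect_equiv (flipSign i) _ _ fun _ => rfl
  have h := Finset.expect_le_expect fun ε (_ : ε ∈ Finset.univ) => hflip ε
  rw [← two_mul_expect_sign_smul, ← Finset.mul_expect, Finset.expect_add_distrib, hperm] at h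
  linarith

lemma expect_trace_signSum_pow_add_two_le {A : ι → Matrix m m ℝ} (hA : ∀ i, (A i).IsHermitian)
    {σ : ℝ} (hσ : (σ • (1 : Matrix m m ℝ) - ∑ i, A i * A i).PosSemidef) {n : ℕ} (hn : Even n) :
    𝔼 ε, (signSum A ε ^ (n + 2)).trace ≤ (n + 1) * σ * 𝔼 ε, (signSum A ε ^ n).trace := by
  have hpsd (ε : ι → ℤˣ) :
      ((∑ i, A i * A i) * signSum A ε ^ n).trace ≤ σ * (signSum A ε ^ n).trace := by
    have h := trace_mul_nonneg hσ (posSemidef_pow_of_even (isHermitian_signSum hA ε) hn)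
    simpa [sub_mul] using h
  calc 𝔼 ε, (signSum A ε ^ (n + 2)).trace
      = ∑ i, 𝔼 ε, ε i • (A i * signSum A ε ^ (n + 1)).trace := by
        rw [← Finset.expect_sum_comm]
        refine Finset.expect_congr rfl fun ε _ => ?_
        simp only [← trace_smul, ← smul_mul_assoc, ← trace_sum, ← Finset.sum_mul]
        rw [pow_succ']
        rfl
    _ ≤ ∑ i, (n + 1) * 𝔼 ε, (A i * A i * signSum A ε ^ n).trace :=
        Finset.sum_le_sum fun i _ => expect_sign_smul_trace_mul_pow_le hA i hn
    _ = (n + 1) * 𝔼 ε, ((∑ i, A i * A i) * signSum A ε ^ n).trace := by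
        simp only [← Finset.mul_sum, ← Finset.expect_sum_comm, Finset.sum_mul, trace_sum]
    _ ≤ (n + 1) * 𝔼 ε, σ * (signSum A ε ^ n).trace := by
        gcongr with ε _
        exact hpsd ε
    _ = (n + 1) * σ * 𝔼 ε, (signSum A ε ^ n).trace := by rw [← Finset.mul_expect, mul_assoc]

/-- The factorial form `(2 p - 1)‼ = (2 p)! / (2 ^ p * p!)` of the Gaussian moments is the one that
sums to an exponential. -/
theorem expect_trace_signSum_pow_le {A : ι → Matrix m m ℝ} (hA : ∀ i, (A i).IsHermitian) {σ : ℝ}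
    (hσ0 : 0 ≤ σ) (hσ : (σ • (1 : Matrix m m ℝ) - ∑ i, A i * A i).PosSemidef) (p : ℕ) :
    (𝔼 ε, (signSum A ε ^ (2 * p)).trace) / (2 * p).factorial ≤
      Fintype.card m * ((σ / 2) ^ p / p.factorial) := by
  induction p with
  | zero => simp
  | succ p ih =>
    have hstep := expect_trace_signSum_pow_add_two_le hA hσ (even_two_mul p)
    push_cast at hstep
    calc (𝔼 ε, (signSum A ε ^ (2 * (p + 1))).trace) / (2 * (p + 1)).factorial
        ≤ ((2 * p + 1) * σ * 𝔼 ε, (signSum A ε ^ (2 * p)).trace) /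
            (2 * (p + 1)).factorial := by gcongr; exact hstep
      _ = σ / (2 * (p + 1)) *
            ((𝔼 ε, (signSum A ε ^ (2 * p)).trace) / (2 * p).factorial) := by
          rw [mul_add_one, Nat.factorial_succ, Nat.factorial_succ]
          push_cast
          field_simp
          ring
      _ ≤ σ / (2 * (p + 1)) * (Fintype.card m * ((σ / 2) ^ p / p.factorial)) := by gcongr
      _ = Fintype.card m * ((σ / 2) ^ (p + 1) / (p + 1).factorial) := by
          rw [Nat.factorial_succ, pow_succ]
          push_cast
          field_simp

lemma expect_sum_cosh_eigenvalues_signSum_le {A : ι → Matrix m m ℝ}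
    (hA : ∀ i, (A i).IsHermitian) {σ : ℝ} (hσ0 : 0 ≤ σ)
    (hσ : (σ • (1 : Matrix m m ℝ) - ∑ i, A i * A i).PosSemidef) (θ : ℝ) :
    𝔼 ε, ∑ j, Real.cosh (θ * (isHermitian_signSum hA ε).eigenvalues j) ≤
      Fintype.card m * Real.exp (θ ^ 2 * σ / 2) := by
  refine expect_sum_cosh_le fun p => ?_
  calc (𝔼 ε, ∑ j, (θ * (isHermitian_signSum hA ε).eigenvalues j) ^ (2 * p)) / (2 * p).factorial
      = θ ^ (2 * p) * ((𝔼 ε, (signSum A ε ^ (2 * p)).trace) / (2 * p).factorial) := by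
        simp only [trace_pow_eq_sum_eigenvalues_pow (isHermitian_signSum hA _), mul_pow,
          ← Finset.mul_sum, ← Finset.mul_expect, mul_div_assoc]
    _ ≤ θ ^ (2 * p) * (Fintype.card m * ((σ / 2) ^ p / p.factorial)) :=
        mul_le_mul_of_nonneg_left (expect_trace_signSum_pow_le hA hσ0 hσ p)
          ((even_two_mul p).pow_nonneg θ)
    _ = Fintype.card m * ((θ ^ 2 * σ / 2) ^ p / p.factorial) := by
        rw [pow_mul, mul_div_assoc, mul_pow]
        ring

/-- An eigenvalue violating the bound contributes at least `exp κ / 2` to the `cosh` moment with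
`θ ^ 2 = κ / σ`. -/
theorem signProb_not_posSemidef_le {A : ι → Matrix m m ℝ} (hA : ∀ i, (A i).IsHermitian)
    {σ κ : ℝ} (hσ0 : 0 < σ) (hκ : 0 ≤ κ)
    (hσ : (σ • (1 : Matrix m m ℝ) - ∑ i, A i * A i).PosSemidef) :
    signProb (fun ε => ¬((κ * σ) • (1 : Matrix m m ℝ) - signSum A ε ^ 2).PosSemidef) ≤
      2 * Fintype.card m * Real.exp (-(κ / 2)) := by
  have hθ : √(κ / σ) ^ 2 = κ / σ := Real.sq_sqrt (by positivity)
  have hlarge (ε : ι → ℤˣ) (hε : ¬((κ * σ) • (1 : Matrix m m ℝ) - signSum A ε ^ 2).PosSemidef) :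
      Real.exp κ / 2 ≤ ∑ j, Real.cosh (√(κ / σ) * (isHermitian_signSum hA ε).eigenvalues j) := by
    obtain ⟨j, hj⟩ : ∃ j, κ * σ < (isHermitian_signSum hA ε).eigenvalues j ^ 2 := by
      by_contra! hsmall
      exact hε (posSemidef_smul_one_sub_sq _ hsmall)
    refine le_trans ?_ (Finset.single_le_sum (fun j _ => (Real.cosh_pos _).le)
      (Finset.mem_univ j))
    have hκle : κ ≤ |√(κ / σ) * (isHermitian_signSum hA ε).eigenvalues j| := by
      refine abs_le_of_sq_le_sq' ?_ (abs_nonneg _) |>.2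
      rw [sq_abs, mul_pow, hθ]
      calc κ ^ 2 = κ / σ * (κ * σ) := by field_simp
        _ ≤ κ / σ * (isHermitian_signSum hA ε).eigenvalues j ^ 2 := by gcongr
    rw [← Real.cosh_abs, Real.cosh_eq]
    linarith [Real.exp_le_exp.2 hκle, Real.exp_pos (-|√(κ / σ) *
      (isHermitian_signSum hA ε).eigenvalues j|)]
  have hmarkov := (mul_signProb_le_expect (fun ε => Finset.sum_nonneg fun j _ =>
    (Real.cosh_pos _).le) hlarge).trans (expect_sum_cosh_eigenvalues_signSum_le hA hσ0.le hσ _)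
  have hexp : Real.exp κ = Real.exp (κ / 2) * Real.exp (κ / 2) := by
    rw [← Real.exp_add, add_halves]
  rw [hθ, div_mul_cancel₀ κ hσ0.ne', hexp] at hmarkov
  rw [Real.exp_neg, ← div_eq_mul_inv, le_div_iff₀ (Real.exp_pos _)]
  refine le_of_mul_le_mul_right ?_ (Real.exp_pos (κ / 2))
  linarith

end MatrixKhintchine

section SignPattern

variable {ι κ : Type*} [Fintype ι]

lemma pos_of_posDef_smul_one_sub_sum_mul_self {m : Type*} [Fintype m] [DecidableEq m] [Nonempty m]
    {A : ι → Matrix m m ℝ} (hA : ∀ i, (A i).IsHermitian) {σ : ℝ}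
    (hσ : (σ • (1 : Matrix m m ℝ) - ∑ i, A i * A i).PosDef) : 0 < σ := by
  have hsum : (∑ i, A i * A i).PosSemidef := posSemidef_sum _ fun i _ => by
    simpa only [(hA i).eq] using posSemidef_conjTranspose_mul_self (A i)
  have h := (hσ.add_posSemidef hsum).diag_pos (i := Classical.arbitrary m)
  simpa using h

lemma signProb_not_posSemidef_le_of_posDef [DecidableEq ι] {m : Type*} [Fintype m] [DecidableEq m]
    {A : ι → Matrix m m ℝ} (hA : ∀ i, (A i).IsHermitian) {σ c : ℝ} (hc : 0 ≤ c)
    (hσ : (σ • (1 : Matrix m m ℝ) - ∑ i, A i * A i).PosDef) :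
    signProb (fun ε => ¬((c * σ) • (1 : Matrix m m ℝ) - signSum A ε ^ 2).PosSemidef) ≤
      2 * Fintype.card m * Real.exp (-(c / 2)) := by
  rcases isEmpty_or_nonempty m with hm | hm
  · have hpsd (M : Matrix m m ℝ) : M.PosSemidef := Subsingleton.elim 0 M ▸ .zero
    simp [hpsd, signProb]
  · exact signProb_not_posSemidef_le hA (pos_of_posDef_smul_one_sub_sum_mul_self hA hσ) hc
      hσ.posSemidef

theorem exists_sign_pattern [Fintype κ] {m : κ → Type*}
    [∀ k, Fintype (m k)] [∀ k, DecidableEq (m k)] {A : ∀ k, ι → Matrix (m k) (m k) ℝ}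
    (hA : ∀ k i, (A k i).IsHermitian) {σ : κ → ℝ}
    (hσ : ∀ k, (σ k • (1 : Matrix (m k) (m k) ℝ) - ∑ i, A k i * A k i).PosDef) {b : ι → ℝ}
    (hb : ∑ i, b i ^ 2 ≤ 1) {c : ℝ} (hc : 2 * Real.log (6 * ∑ k, (Fintype.card (m k) : ℝ)) < c) :
    ∃ ε : ι → ℤˣ, |signSum b ε| ≤ 1 ∧
      ∀ k, ((c * σ k) • (1 : Matrix (m k) (m k) ℝ) - signSum (A k) ε ^ 2).PosSemidef := by
  classical
  by_contra! hno
  have hc0 : 0 ≤ c := by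
    have := Real.log_natCast_nonneg (6 * ∑ k, Fintype.card (m k))
    push_cast at this
    linarith
  have hbad : 1 / 3 ≤ 2 * (∑ k, (Fintype.card (m k) : ℝ)) * Real.exp (-(c / 2)) := by
    calc (1 / 3 : ℝ)
        ≤ signProb fun ε => ∃ k, ¬((c * σ k) • 1 - signSum (A k) ε ^ 2).PosSemidef :=
          (one_third_le_signProb_abs_signSum_le_one b hb).trans (signProb_mono hno)
      _ ≤ ∑ k, 2 * Fintype.card (m k) * Real.exp (-(c / 2)) :=
          (signProb_exists_le _).trans (Finset.sum_le_sum fun k _ =>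
            signProb_not_posSemidef_le_of_posDef (hA k) hc0 (hσ k))
      _ = 2 * (∑ k, (Fintype.card (m k) : ℝ)) * Real.exp (-(c / 2)) := by
          rw [Finset.mul_sum, Finset.sum_mul]
  rw [Real.exp_neg, ← div_eq_mul_inv, le_div_iff₀ (Real.exp_pos _)] at hbad
  have hpos : 0 < 6 * ∑ k, (Fintype.card (m k) : ℝ) := by
    linarith [Real.exp_pos (c / 2)]
  rw [← lt_div_iff₀' two_pos, Real.log_lt_iff_lt_exp hpos] at hc
  linarith

end SignPattern

section Rounding

variable {ι m : Type*} [Fintype ι] [Fintype m]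

/-- The map `𝒮[Q] = ∑ i j, Q i j (S i S j + S j S i) / 2`, whose adjoint is `𝒮^*`. -/
def calS (S : ι → Matrix m m ℝ) : Matrix ι ι ℝ →ₗ[ℝ] Matrix m m ℝ :=
  ∑ i, ∑ j, (entryLinearMap ℝ ℝ i j).smulRight ((1 / 2 : ℝ) • (S i * S j + S j * S i))

lemma calS_apply (S : ι → Matrix m m ℝ) (Q : Matrix ι ι ℝ) :
    calS S Q = ∑ i, ∑ j, Q i j • ((1 / 2 : ℝ) • (S i * S j + S j * S i)) := by
  simp [calS, LinearMap.sum_apply]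

lemma calS_apply_of_isSymm (S : ι → Matrix m m ℝ) {Q : Matrix ι ι ℝ} (hQ : Q.IsSymm) :
    calS S Q = ∑ i, ∑ j, Q i j • (S i * S j) := by
  have hswap : ∑ i, ∑ j, Q i j • (S j * S i) = ∑ i, ∑ j, Q i j • (S i * S j) := by
    rw [Finset.sum_comm]
    simp only [hQ.apply]
  simp only [calS_apply, smul_comm _ (1 / 2 : ℝ), ← Finset.smul_sum, smul_add,
    Finset.sum_add_distrib, hswap]
  rw [← smul_add, ← two_smul ℝ, smul_smul]
  norm_num

lemma sum_linearCombination_col_mul_self (S : ι → Matrix m m ℝ) (G : Matrix ι ι ℝ) :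
    ∑ l, Fintype.linearCombination ℝ S (G.col l) * Fintype.linearCombination ℝ S (G.col l) =
      calS S (G * Gᵀ) := by
  rw [calS_apply_of_isSymm S (isSymm_mul_transpose_self G)]
  simp only [Fintype.linearCombination_apply, col_apply, Matrix.mul_apply, transpose_apply,
    Finset.sum_smul, Finset.sum_mul_sum, smul_mul_smul_comm]
  rw [Finset.sum_comm]
  exact Finset.sum_congr rfl fun i _ => Finset.sum_comm

lemma dotProduct_mulVec_signSum_of_diagonal [DecidableEq ι] {M G : Matrix ι ι ℝ} {d : ι → ℝ}
    (h : Gᵀ * M * G = diagonal d) (ε : ι → ℤˣ) :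
    signSum G.col ε ⬝ᵥ M *ᵥ signSum G.col ε = (M * (G * Gᵀ)).trace := by
  have hcol : signSum G.col ε = G *ᵥ fun l => ((ε l : ℤ) : ℝ) := by
    ext i
    simp [signSum, Units.smul_def, mulVec, dotProduct, mul_comm]
  have hsq (l : ι) : ((ε l : ℤ) : ℝ) * ((ε l : ℤ) : ℝ) = 1 := by
    rw [← Int.cast_mul, ← Units.val_mul, Int.units_mul_self, Units.val_one, Int.cast_one]
  rw [← Matrix.mul_assoc, trace_mul_comm, ← Matrix.mul_assoc, h, trace_diagonal, hcol,
    mulVec_mulVec, dotProduct_comm, dotProduct_mulVec, ← mulVec_transpose, mulVec_mulVec,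
    ← Matrix.mul_assoc, h]
  refine Finset.sum_congr rfl fun l _ => ?_
  rw [mulVec_diagonal, mul_assoc, hsq, mul_one]

/-- Rotating a square root of `Y` so that it diagonalizes `M` makes the quadratic form constant on
all sign patterns. -/
lemma exists_factor_forall_signSum {M Y : Matrix ι ι ℝ} (hM : M.IsHermitian)
    (hY : Y.PosSemidef) : ∃ G : Matrix ι ι ℝ, Y = G * Gᵀ ∧
      ∀ ε, signSum G.col ε ⬝ᵥ M *ᵥ signSum G.col ε = (M * Y).trace := by
  classical
  obtain ⟨C, rfl⟩ := exists_eq_conjTranspose_mul_self hY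
  obtain ⟨U, d, hU, hUd⟩ : ∃ (U : Matrix ι ι ℝ) (d : ι → ℝ), U * Uᴴ = 1 ∧
      Uᴴ * (C * M * Cᴴ) * U = diagonal d := by
    have hW : (C * M * Cᴴ).IsHermitian := isHermitian_mul_mul_conjTranspose C hM
    refine ⟨hW.eigenvectorUnitary, hW.eigenvalues,
      Unitary.mul_star_self_of_mem hW.eigenvectorUnitary.2, ?_⟩
    simpa [Unitary.conjStarAlgAut_apply, star_eq_conjTranspose, Function.comp_def]
      using hW.conjStarAlgAut_star_eigenvectorUnitary
  have htranspose : (Cᴴ * U)ᵀ = Uᴴ * C := by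
    rw [← conjTranspose_eq_transpose_of_trivial, conjTranspose_mul, conjTranspose_conjTranspose]
  have hG : Cᴴ * C = Cᴴ * U * (Cᴴ * U)ᵀ := by
    rw [htranspose, Matrix.mul_assoc, ← Matrix.mul_assoc U, hU, Matrix.one_mul]
  have hdiag : (Cᴴ * U)ᵀ * M * (Cᴴ * U) = diagonal d := by
    rw [htranspose, ← hUd]
    simp only [Matrix.mul_assoc]
  exact ⟨Cᴴ * U, hG, fun ε => hG ▸ dotProduct_mulVec_signSum_of_diagonal hdiag ε⟩

variable {κ : Type*} [Fintype κ] {f : κ → Type*} [∀ k, Fintype (f k)] [∀ k, DecidableEq (f k)]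

theorem exists_rounding {M Y : Matrix ι ι ℝ} (hM : M.IsHermitian) (hY : Y.PosSemidef)
    {S : ∀ k, ι → Matrix (f k) (f k) ℝ} (hS : ∀ k i, (S k i).IsHermitian) {σ : κ → ℝ}
    (hσ : ∀ k, (σ k • (1 : Matrix (f k) (f k) ℝ) - calS (S k) Y).PosDef) {i₀ : ι}
    (hY₀ : Y i₀ i₀ ≤ 1) {c : ℝ} (hc : 2 * Real.log (6 * ∑ k, (Fintype.card (f k) : ℝ)) < c) :
    ∃ v : ι → ℝ, v ⬝ᵥ M *ᵥ v = (M * Y).trace ∧ |v i₀| ≤ 1 ∧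
      ∀ k, ((c * σ k) • (1 : Matrix (f k) (f k) ℝ) - (∑ i, v i • S k i) ^ 2).PosSemidef := by
  classical
  obtain ⟨G, rfl, hG⟩ := exists_factor_forall_signSum hM hY
  have hherm (k : κ) (u : ι → ℝ) : (Fintype.linearCombination ℝ (S k) u).IsHermitian := by
    simp only [Matrix.IsHermitian, Fintype.linearCombination_apply, conjTranspose_sum,
      conjTranspose_smul, star_trivial, (hS k _).eq]
  have hsq : ∑ l, G.col l i₀ ^ 2 ≤ 1 := by
    simpa only [Matrix.mul_apply, transpose_apply, col_apply, sq] using hY₀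
  obtain ⟨ε, hε₀, hε⟩ := exists_sign_pattern
    (A := fun k l => Fintype.linearCombination ℝ (S k) (G.col l)) (fun k l => hherm k _)
    (fun k => by rw [sum_linearCombination_col_mul_self]; exact hσ k)
    (b := fun l => LinearMap.proj (R := ℝ) i₀ (G.col l)) hsq hc
  simp only [← map_signSum] at hε₀ hε
  exact ⟨signSum G.col ε, hG ε, hε₀, hε⟩

end Rounding

section LagrangeMultipliers

lemma nonpos_and_nonneg_of_forall_pos_mul_le {a c : ℝ} (h : ∀ r > 0, r * a ≤ c) :
    a ≤ 0 ∧ 0 ≤ c := by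
  constructor
  · by_contra! ha
    have := h ((|c| + 1) / a) (by positivity)
    rw [div_mul_cancel₀ _ ha.ne'] at this
    linarith [le_abs_self c]
  · by_contra! hc
    have ha : a < 0 := by linarith [h 1 one_pos]
    have := h (c / (2 * a)) (div_pos_of_neg_of_neg hc (by linarith))
    rw [div_mul_eq_mul_div, mul_div_mul_right _ _ ha.ne] at this
    linarith

lemma map_prodMk_eq_mul_add {E : Type*} [AddCommGroup E] [Module ℝ E] (g : ℝ × E →ₗ[ℝ] ℝ) (a : ℝ)
    (y : E) : g (a, y) = a * g (1, 0) + g (0, y) := by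
  rw [← smul_eq_mul, ← map_smul, ← map_add]
  simp

theorem exists_lagrange_multiplier {E : Type*} [AddCommGroup E] [Module ℝ E] [TopologicalSpace E]
    [IsTopologicalAddGroup E] [ContinuousSMul ℝ E] {O : Set E} (hOopen : IsOpen O)
    (hOconv : Convex ℝ O) (hOcone : ∀ r : ℝ, 0 < r → ∀ y ∈ O, r • y ∈ O) {A : Set (ℝ × E)}
    (hA : Convex ℝ A) (hopt : ∀ p ∈ A, p.2 ∈ O → p.1 ≤ 0) (hslater : ∃ p ∈ A, p.2 ∈ O) :
    ∃ φ : E →L[ℝ] ℝ, (∀ y ∈ O, 0 ≤ φ y) ∧ ∀ p ∈ A, p.1 + φ p.2 ≤ 0 := by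
  have hdisj : Disjoint (Set.Ioi 0 ×ˢ O) A := Set.disjoint_left.2 fun p hp hpA =>
    (hopt p hpA hp.2).not_gt hp.1
  obtain ⟨g, u, hgO, hgA⟩ :=
    geometric_hahn_banach_open ((convex_Ioi 0).prod hOconv) (isOpen_Ioi.prod hOopen) hA hdisj
  have hg (a : ℝ) (y : E) : g (a, y) = a * g (1, 0) + g (0, y) :=
    map_prodMk_eq_mul_add g.toLinearMap a y
  have hcone {s : ℝ} (hs : 0 < s) {y : E} (hy : y ∈ O) : g (s, y) ≤ 0 ∧ 0 ≤ u :=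
    nonpos_and_nonneg_of_forall_pos_mul_le fun r hr => by
      rw [← smul_eq_mul, ← map_smul]
      exact (hgO _ ⟨Set.mem_Ioi.2 (mul_pos hr hs), hOcone r hr y hy⟩).le
  obtain ⟨p₀, hp₀A, hp₀O⟩ := hslater
  have hu : 0 ≤ u := (hcone one_pos hp₀O).2
  have hneg : g (1, 0) < 0 := by
    refine lt_of_le_of_ne ?_ fun h0 => ?_
    · refine (nonpos_and_nonneg_of_forall_pos_mul_le (c := -g (0, p₀.2)) fun s hs => ?_).1
      linarith [(hcone hs hp₀O).1, hg s p₀.2]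
    · have hlt := hgO (1, p₀.2) ⟨Set.mem_Ioi.2 one_pos, hp₀O⟩
      have hle := hgA p₀ hp₀A
      rw [hg, h0, mul_zero] at hlt
      rw [← Prod.mk.eta (p := p₀), hg, h0, mul_zero] at hle
      linarith
  have hinr {y : E} (hy : y ∈ O) : g (0, y) ≤ 0 := by
    refine (nonpos_and_nonneg_of_forall_pos_mul_le (c := -g (1, 0)) fun r hr => ?_).1
    have h1 := (hcone one_pos (hOcone r hr y hy)).1
    have h2 : g (0, r • y) = r * g (0, y) := by
      rw [← smul_eq_mul, ← map_smul]
      simp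
    linarith [hg 1 (r • y)]
  refine ⟨(g (1, 0))⁻¹ • g.comp (ContinuousLinearMap.inr ℝ ℝ E), fun y hy => ?_, fun p hp => ?_⟩
  · exact mul_nonneg_of_nonpos_of_nonpos (inv_nonpos.2 hneg.le) (hinr hy)
  · have hle := hu.trans (hgA p hp)
    rw [← Prod.mk.eta (p := p), hg] at hle
    have := mul_nonpos_of_nonpos_of_nonneg (inv_nonpos.2 hneg.le) hle
    rw [mul_add, mul_left_comm, inv_mul_cancel₀ hneg.ne, mul_one] at this
    exact this

variable {m : Type*} [Fintype m]

/-- Matrices, not necessarily symmetric, with positive definite quadratic form: an open cone in the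
space of all matrices. -/
def positiveForms (m : Type*) [Fintype m] : Set (Matrix m m ℝ) :=
  {N | ∀ v : m → ℝ, v ≠ 0 → 0 < v ⬝ᵥ N *ᵥ v}

lemma add_mem_positiveForms {N N' : Matrix m m ℝ} (hN : ∀ v : m → ℝ, 0 ≤ v ⬝ᵥ N *ᵥ v)
    (hN' : N' ∈ positiveForms m) : N + N' ∈ positiveForms m := fun v hv => by
  rw [add_mulVec, dotProduct_add]
  exact add_pos_of_nonneg_of_pos (hN v) (hN' v hv)

lemma smul_mem_positiveForms {N : Matrix m m ℝ} {r : ℝ} (hr : 0 < r)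
    (hN : N ∈ positiveForms m) : r • N ∈ positiveForms m := fun v hv => by
  rw [smul_mulVec, dotProduct_smul, smul_eq_mul]
  exact mul_pos hr (hN v hv)

lemma one_mem_positiveForms [DecidableEq m] : 1 ∈ positiveForms m := fun v hv => by
  rw [one_mulVec]
  simpa using dotProduct_star_self_pos_iff.2 hv

lemma convex_positiveForms : Convex ℝ (positiveForms m) := by
  refine convex_iff_forall_pos.2 fun N hN N' hN' a b ha hb _ =>
    add_mem_positiveForms (fun v => ?_) (smul_mem_positiveForms hb hN')
  rcases eq_or_ne v 0 with rfl | hv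
  · simp
  · exact (smul_mem_positiveForms ha hN v hv).le

lemma isOpen_positiveForms : IsOpen (positiveForms m) := by
  have hsphere : positiveForms m =
      {N | ∀ v ∈ Metric.sphere (0 : m → ℝ) 1, 0 < v ⬝ᵥ N *ᵥ v} := by
    ext N
    refine ⟨fun h v hv => h v (ne_zero_of_mem_unit_sphere ⟨v, hv⟩), fun h v hv => ?_⟩
    have hpos := h (‖v‖⁻¹ • v) (by simp [norm_smul, hv])
    rw [mulVec_smul, smul_dotProduct, dotProduct_smul, smul_smul, smul_eq_mul] at hpos
    exact pos_of_mul_pos_right hpos (mul_self_nonneg _)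
  rw [hsphere, isOpen_iff_eventually]
  refine fun N hN => (isCompact_sphere 0 1).eventually_forall_of_forall_eventually fun v hv => ?_
  have hcont : Continuous fun q : Matrix m m ℝ × (m → ℝ) => q.2 ⬝ᵥ q.1 *ᵥ q.2 := by fun_prop
  exact hcont.continuousAt.eventually_const_lt (hN v hv)

lemma exists_posSemidef_forall_eq_trace_mul {g : Matrix m m ℝ →ₗ[ℝ] ℝ}
    (hg : ∀ N : Matrix m m ℝ, (∀ v : m → ℝ, 0 ≤ v ⬝ᵥ N *ᵥ v) → 0 ≤ g N) :
    ∃ L : Matrix m m ℝ, L.PosSemidef ∧ ∀ N, g N = (L * N).trace := by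
  classical
  obtain ⟨L, hL⟩ : ∃ L : Matrix m m ℝ, ∀ N, g N = (L * N).trace := by
    refine ⟨of fun i j => g (single j i 1), fun N => ?_⟩
    have h : g = traceLinearMap m ℝ ℝ ∘ₗ
        LinearMap.mulLeft ℝ (of fun i j => g (single j i 1)) := by
      refine ext_linearMap ℝ fun i j => LinearMap.ext_ring ?_
      simp [trace_mul_single]
    exact LinearMap.congr_fun h N
  have hsymm (i j : m) : L i j ≤ L j i := by
    have hskew : 0 ≤ g (single i j 1 - single j i 1) := hg _ fun v => by
      simp [sub_mulVec, single_mulVec, dotProduct, Function.update_apply, mul_sub, mul_comm]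
    simpa [hL, mul_sub, trace_mul_single] using hskew
  refine ⟨L, .of_dotProduct_mulVec_nonneg (.ext fun i j => (hsymm j i).antisymm (hsymm i j))
    fun v => ?_, hL⟩
  have hsq : 0 ≤ g (vecMulVec v v) := hg _ fun u => by
    rw [vecMulVec_mulVec, op_smul_eq_smul, dotProduct_smul, smul_eq_mul, dotProduct_comm v]
    exact mul_self_nonneg _
  rwa [hL, mul_vecMulVec, trace_vecMulVec, dotProduct_comm] at hsq

end LagrangeMultipliers

section Multipliers

variable {κ : Type*} [Fintype κ] {m : κ → Type*} [∀ k, Fintype (m k)]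

lemma exists_posSemidef_forall_eq_sum_trace_mul [DecidableEq κ]
    {g : (∀ k, Matrix (m k) (m k) ℝ) →ₗ[ℝ] ℝ}
    (hg : ∀ k (N : Matrix (m k) (m k) ℝ), (∀ v : m k → ℝ, 0 ≤ v ⬝ᵥ N *ᵥ v) →
      0 ≤ g (Pi.single k N)) :
    ∃ L : ∀ k, Matrix (m k) (m k) ℝ, (∀ k, (L k).PosSemidef) ∧
      ∀ N, g N = ∑ k, (L k * N k).trace := by
  choose L hL hgL using fun k => exists_posSemidef_forall_eq_trace_mul
    (g := g ∘ₗ LinearMap.single ℝ (fun k => Matrix (m k) (m k) ℝ) k) (hg k)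
  refine ⟨L, hL, fun N => ?_⟩
  conv_lhs => rw [← Finset.univ_sum_single N, map_sum]
  exact Finset.sum_congr rfl fun k _ => hgL k (N k)

theorem exists_posSemidef_multipliers {A : Set (ℝ × ℝ × ∀ k, Matrix (m k) (m k) ℝ)}
    (hA : Convex ℝ A)
    (hopt : ∀ p ∈ A, 0 < p.2.1 → (∀ k, p.2.2 k ∈ positiveForms (m k)) → p.1 ≤ 0)
    (hslater : ∃ p ∈ A, 0 < p.2.1 ∧ ∀ k, p.2.2 k ∈ positiveForms (m k)) :
    ∃ (β : ℝ) (L : ∀ k, Matrix (m k) (m k) ℝ), (∀ k, (L k).PosSemidef) ∧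
      ∀ p ∈ A, p.1 + β * p.2.1 + ∑ k, (L k * p.2.2 k).trace ≤ 0 := by
  classical
  set O : Set (ℝ × ∀ k, Matrix (m k) (m k) ℝ) :=
    Set.Ioi 0 ×ˢ Set.univ.pi fun k => positiveForms (m k)
  have mem_O {y} : y ∈ O ↔ 0 < y.1 ∧ ∀ k, y.2 k ∈ positiveForms (m k) := by
    simp [O, Set.mem_prod]
  obtain ⟨φ, hφO, hφA⟩ := exists_lagrange_multiplier (O := O)
    (isOpen_Ioi.prod (isOpen_set_pi Set.finite_univ fun k _ => isOpen_positiveForms))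
    ((convex_Ioi 0).prod (convex_pi fun k _ => convex_positiveForms))
    (fun r hr y hy => mem_O.2
      ⟨mul_pos hr (mem_O.1 hy).1, fun k => smul_mem_positiveForms hr ((mem_O.1 hy).2 k)⟩)
    hA (fun p hp hpO => hopt p hp (mem_O.1 hpO).1 (mem_O.1 hpO).2)
    (hslater.imp fun p hp => ⟨hp.1, mem_O.2 hp.2⟩)
  have hφ_single (k : κ) (N : Matrix (m k) (m k) ℝ) (hN : ∀ v : m k → ℝ, 0 ≤ v ⬝ᵥ N *ᵥ v) :
      0 ≤ φ (0, Pi.single k N) := by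
    have hmem (r : ℝ) (hr : 0 < r) :
        r • ((0, Pi.single k N) : ℝ × ∀ k, Matrix (m k) (m k) ℝ) + (1, fun _ => 1) ∈ O := by
      refine mem_O.2 ⟨by simp, fun l => add_mem_positiveForms (fun v => ?_) one_mem_positiveForms⟩
      rcases eq_or_ne l k with rfl | hl
      · simpa [smul_mulVec] using mul_nonneg hr.le (hN v)
      · simp [hl]
    refine neg_nonpos.1
      (nonpos_and_nonneg_of_forall_pos_mul_le (c := φ (1, fun _ => 1)) fun r hr => ?_).1
    have := hφO _ (hmem r hr)
    rw [map_add, map_smul, smul_eq_mul] at this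
    linarith
  obtain ⟨L, hL, hφL⟩ := exists_posSemidef_forall_eq_sum_trace_mul
    (g := φ.toLinearMap ∘ₗ LinearMap.inr ℝ ℝ _) hφ_single
  refine ⟨φ (1, 0), L, hL, fun p hp => ?_⟩
  rw [← hφL, add_assoc, mul_comm]
  exact (congrArg (p.1 + ·) (map_prodMk_eq_mul_add φ.toLinearMap p.2.1 p.2.2)).symm.trans_le
    (hφA p hp)

end Multipliers

section Certificate

variable {ι m : Type*} [Fintype m]

/-- The adjoint `𝒮^*` of `calS S` for the trace pairing, for families indexed by any type:
`calSstar` is the case of `Fin`-indexed data. -/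
def calSAdjoint (S : ι → Matrix m m ℝ) (Λ : Matrix m m ℝ) : Matrix ι ι ℝ :=
  of fun i j => (Λ * ((1 / 2 : ℝ) • (S i * S j + S j * S i))).trace

lemma isHermitian_calSAdjoint (S : ι → Matrix m m ℝ) (Λ : Matrix m m ℝ) :
    (calSAdjoint S Λ).IsHermitian :=
  .ext fun i j => by simp only [calSAdjoint, of_apply, add_comm, star_trivial]

variable [Fintype ι]

lemma trace_calSAdjoint_mul (S : ι → Matrix m m ℝ) (Λ : Matrix m m ℝ) (Y : Matrix ι ι ℝ) :
    (calSAdjoint S Λ * Y).trace = (Λ * calS S Y).trace := by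
  rw [trace_mul_comm, calS_apply, Finset.mul_sum, trace_sum]
  refine Finset.sum_congr rfl fun i _ => ?_
  rw [diag_apply, Matrix.mul_apply, Finset.mul_sum, trace_sum]
  refine Finset.sum_congr rfl fun j _ => ?_
  rw [Matrix.mul_smul, trace_smul, smul_eq_mul, ← (isHermitian_calSAdjoint S Λ).apply,
    star_trivial]
  rfl

lemma isHermitian_calS {S : ι → Matrix m m ℝ} (hS : ∀ i, (S i).IsHermitian) (Q : Matrix ι ι ℝ) :
    (calS S Q).IsHermitian := by
  simp only [calS_apply, Matrix.IsHermitian, conjTranspose_sum, conjTranspose_smul,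
    conjTranspose_add, conjTranspose_mul, (hS _).eq, star_trivial, add_comm]

lemma posSemidef_of_forall_le_trace_mul {N : Matrix ι ι ℝ} (hN : N.IsHermitian) {c : ℝ}
    (h : ∀ Y : Matrix ι ι ℝ, Y.PosSemidef → c ≤ (N * Y).trace) : N.PosSemidef := by
  refine .of_dotProduct_mulVec_nonneg hN fun v => neg_nonpos.1
    (nonpos_and_nonneg_of_forall_pos_mul_le (c := -c) fun r hr => ?_).1
  have := h _ ((posSemidef_vecMulVec_self_star v).smul hr.le)
  rw [Matrix.mul_smul, trace_smul, smul_eq_mul, mul_vecMulVec, trace_vecMulVec,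
    dotProduct_comm] at this
  linarith

variable {κ : Type*} [Fintype κ] {f : κ → Type*} [∀ k, Fintype (f k)] [∀ k, DecidableEq (f k)]

theorem exists_dual_certificate (M : Matrix ι ι ℝ) {S : ∀ k, ι → Matrix (f k) (f k) ℝ}
    (hS : ∀ k i, (S k i).IsHermitian) {T : Set (κ → ℝ)} (hT : Convex ℝ T)
    (hTpos : ∃ σ ∈ T, ∀ k, 0 < σ k) {i₀ : ι} {ξ : ℝ}
    (h : ∀ Y : Matrix ι ι ℝ, Y.PosSemidef → Y i₀ i₀ ≤ 1 → ∀ σ ∈ T,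
      (∀ k, (σ k • (1 : Matrix (f k) (f k) ℝ) - calS (S k) Y).PosDef) → (M * Y).trace ≤ ξ) :
    ∃ (Λ : ∀ k, Matrix (f k) (f k) ℝ) (τ : ℝ), (∀ k, (Λ k).PosSemidef) ∧
      ∀ Y : Matrix ι ι ℝ, Y.PosSemidef → ∀ σ ∈ T, (M * Y).trace + τ * (1 - Y i₀ i₀) +
        ∑ k, (Λ k * (σ k • (1 : Matrix (f k) (f k) ℝ) - calS (S k) Y)).trace ≤ ξ := by
  set A : Set (ℝ × ℝ × ∀ k, Matrix (f k) (f k) ℝ) :=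
    {p | ∃ Y : Matrix ι ι ℝ, Y.PosSemidef ∧ ∃ σ ∈ T,
      p = ((M * Y).trace - ξ, 1 - Y i₀ i₀, fun k => σ k • 1 - calS (S k) Y)}
  have hA : Convex ℝ A := by
    rintro _ ⟨Y, hY, σ, hσ, rfl⟩ _ ⟨Y', hY', σ', hσ', rfl⟩ a b ha hb hab
    refine ⟨a • Y + b • Y', (hY.smul ha).add (hY'.smul hb), a • σ + b • σ',
      hT hσ hσ' ha hb hab, Prod.ext ?_ (Prod.ext ?_ (funext fun k => ?_))⟩
    · simp only [Prod.smul_mk, Prod.mk_add_mk, smul_eq_mul, Matrix.mul_add, Matrix.mul_smul,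
        trace_add, trace_smul]
      linear_combination (-ξ) * hab
    · simp only [Prod.smul_mk, Prod.mk_add_mk, smul_eq_mul, Matrix.add_apply, Matrix.smul_apply]
      linear_combination hab
    · simp only [Prod.smul_mk, Prod.mk_add_mk, Pi.add_apply, Pi.smul_apply, smul_eq_mul, map_add,
        map_smul]
      module
  have hopt : ∀ p ∈ A, 0 < p.2.1 → (∀ k, p.2.2 k ∈ positiveForms (f k)) → p.1 ≤ 0 := by
    rintro _ ⟨Y, hY, σ, hσ, rfl⟩ hY₀ hpos
    refine sub_nonpos.2 (h Y hY (sub_pos.1 hY₀).le σ hσ fun k => ?_)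
    exact .of_dotProduct_mulVec_pos ((isHermitian_one.smul (.all _)).sub
      (isHermitian_calS (hS k) Y)) (hpos k)
  obtain ⟨σ₀, hσ₀, hσ₀pos⟩ := hTpos
  have hslater : ∃ p ∈ A, 0 < p.2.1 ∧ ∀ k, p.2.2 k ∈ positiveForms (f k) :=
    ⟨_, ⟨0, .zero, σ₀, hσ₀, rfl⟩, by simp, fun k => by
      simpa using smul_mem_positiveForms (hσ₀pos k) one_mem_positiveForms⟩
  obtain ⟨τ, Λ, hΛ, hle⟩ := exists_posSemidef_multipliers hA hopt hslater
  refine ⟨Λ, τ, hΛ, fun Y hY σ hσ => ?_⟩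
  linarith [hle _ ⟨Y, hY, σ, hσ, rfl⟩]

variable [DecidableEq ι]

theorem exists_quadratic_certificate {M : Matrix ι ι ℝ} (hM : M.IsHermitian)
    {S : ∀ k, ι → Matrix (f k) (f k) ℝ} (hS : ∀ k i, (S k i).IsHermitian) {T : Set (κ → ℝ)}
    (hT : Convex ℝ T) (hTpos : ∃ σ ∈ T, ∀ k, 0 < σ k) {i₀ : ι} {c ξ : ℝ}
    (hc : 2 * Real.log (6 * ∑ k, (Fintype.card (f k) : ℝ)) < c)
    (h : ∀ v : ι → ℝ, |v i₀| ≤ 1 → ∀ σ ∈ T,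
      (∀ k, ((c * σ k) • (1 : Matrix (f k) (f k) ℝ) - (∑ i, v i • S k i) ^ 2).PosSemidef) →
        v ⬝ᵥ M *ᵥ v ≤ ξ) :
    ∃ (Λ : ∀ k, Matrix (f k) (f k) ℝ) (τ : ℝ), (∀ k, (Λ k).PosSemidef) ∧
      (∑ k, calSAdjoint (S k) (Λ k) + single i₀ i₀ τ - M).PosSemidef ∧
      ∀ σ ∈ T, ∑ k, (Λ k).trace * σ k + τ ≤ ξ := by
  obtain ⟨Λ, τ, hΛ, hcert⟩ := exists_dual_certificate M hS hT hTpos (i₀ := i₀) (ξ := ξ)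
    fun Y hY hY₀ σ hσ hpos => by
      obtain ⟨v, hv, hv₀, hvS⟩ := exists_rounding hM hY hS hpos hY₀ hc
      exact hv ▸ h v hv₀ σ hσ hvS
  have htrace (Y : Matrix ι ι ℝ) (hY : Y.PosSemidef) (σ : κ → ℝ) (hσ : σ ∈ T) :
      ∑ k, (Λ k).trace * σ k + τ - ξ ≤
        ((∑ k, calSAdjoint (S k) (Λ k) + single i₀ i₀ τ - M) * Y).trace := by
    have := hcert Y hY σ hσ
    simp only [Matrix.mul_sub, Matrix.mul_smul, Matrix.mul_one, trace_sub, trace_smul,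
      smul_eq_mul, Finset.sum_sub_distrib, mul_comm (σ _)] at this
    simp only [Matrix.sub_mul, Matrix.add_mul, Matrix.sum_mul, trace_sub, trace_add, trace_sum,
      trace_calSAdjoint_mul, trace_single_mul, smul_eq_mul]
    linarith
  obtain ⟨σ₀, hσ₀, -⟩ := hTpos
  refine ⟨Λ, τ, hΛ, posSemidef_of_forall_le_trace_mul ?_ fun Y hY => htrace Y hY σ₀ hσ₀,
    fun σ hσ => by simpa using htrace 0 .zero σ hσ⟩
  refine (IsHermitian.add ?_ ?_).sub hM
  · exact isSelfAdjoint_sum _ fun k _ => isHermitian_calSAdjoint (S k) (Λ k)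
  · rw [Matrix.IsHermitian, conjTranspose_single, star_trivial]

end Certificate

section Spectratope

lemma isHermitian_qPlus {m : ℕ} {Q : Matrix (Fin m) (Fin m) ℝ} (hQ : Q.IsHermitian)
    (q : Fin m → ℝ) : (qPlus Q q).IsHermitian :=
  hQ.fromBlocks rfl isHermitian_zero

lemma dotProduct_qPlus_mulVec {m : ℕ} (Q : Matrix (Fin m) (Fin m) ℝ) (q : Fin m → ℝ)
    (v : Fin m ⊕ Unit → ℝ) :
    v ⬝ᵥ qPlus Q q *ᵥ v =
      (v ∘ Sum.inl) ⬝ᵥ Q *ᵥ (v ∘ Sum.inl) + 2 * v (Sum.inr ()) * (q ⬝ᵥ (v ∘ Sum.inl)) := by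
  have hcol : (v ∘ Sum.inl) ⬝ᵥ (v (Sum.inr ()) • q) =
      v (Sum.inr ()) * (q ⬝ᵥ (v ∘ Sum.inl)) := by
    rw [dotProduct_smul, smul_eq_mul, dotProduct_comm]
  have hmul : qPlus Q q *ᵥ v = Sum.elim (Q *ᵥ (v ∘ Sum.inl) + v (Sum.inr ()) • q)
      fun _ => q ⬝ᵥ (v ∘ Sum.inl) := by
    ext (i | i) <;> simp [qPlus, mulVec, dotProduct, Fintype.sum_sum_type, mul_comm]
  have hsplit (a : Fin m → ℝ) (b : Unit → ℝ) :
      v ⬝ᵥ Sum.elim a b = (v ∘ Sum.inl) ⬝ᵥ a + (v ∘ Sum.inr) ⬝ᵥ b := by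
    conv_lhs => rw [← Sum.elim_comp_inl_inr v, sumElim_dotProduct_sumElim]
  rw [hmul, hsplit, dotProduct_add, hcol]
  simp only [dotProduct, Finset.univ_unique, Finset.sum_singleton, Function.comp_apply]
  ring

lemma dotProduct_qPlus_mulVec_le {m : ℕ} {Q : Matrix (Fin m) (Fin m) ℝ} {q : Fin m → ℝ}
    {v : Fin m ⊕ Unit → ℝ} {ξ : ℝ} (hv : |v (Sum.inr ())| ≤ 1)
    (h : (v ∘ Sum.inl) ⬝ᵥ Q *ᵥ (v ∘ Sum.inl) + 2 * |q ⬝ᵥ (v ∘ Sum.inl)| ≤ ξ) :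
    v ⬝ᵥ qPlus Q q *ᵥ v ≤ ξ := by
  have hmul : v (Sum.inr ()) * (q ⬝ᵥ (v ∘ Sum.inl)) ≤ |q ⬝ᵥ (v ∘ Sum.inl)| := by
    calc v (Sum.inr ()) * (q ⬝ᵥ (v ∘ Sum.inl))
        ≤ |v (Sum.inr ())| * |q ⬝ᵥ (v ∘ Sum.inl)| := by
          rw [← abs_mul]
          exact le_abs_self _
      _ ≤ |q ⬝ᵥ (v ∘ Sum.inl)| := mul_le_of_le_one_left (abs_nonneg _) hv
  rw [dotProduct_qPlus_mulVec]
  linarith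

lemma sum_calSAdjoint_add_single_sub_qPlus {nb K : ℕ} {f : Fin K → ℕ}
    (S : (k : Fin K) → Fin nb → Matrix (Fin (f k)) (Fin (f k)) ℝ)
    (Λ : (k : Fin K) → Matrix (Fin (f k)) (Fin (f k)) ℝ) (τ : ℝ) (Q : Matrix (Fin nb) (Fin nb) ℝ)
    (q : Fin nb → ℝ) :
    ∑ k, calSAdjoint (Sum.elim (S k) 0) (Λ k) + single (Sum.inr ()) (Sum.inr ()) τ - qPlus Q q =
      fromBlocks ((∑ k, calSstar (S k) (Λ k)) - Q) (of fun i (_ : Unit) => -q i)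
        (of fun (_ : Unit) j => -q j) (of fun _ _ => τ) := by
  ext (i | i) (j | j) <;> simp [Matrix.sum_apply, qPlus, calSAdjoint, calSstar]

variable {n nb K : ℕ} {P : Matrix (Fin n) (Fin nb) ℝ} {f : Fin K → ℕ}
  {Smat : (k : Fin K) → Fin nb → Matrix (Fin (f k)) (Fin (f k)) ℝ} {T : Set (Fin K → ℝ)}

lemma neg_mem_spectratope {s : ℝ} {ζ : Fin n → ℝ} (hζ : ζ ∈ spectratope f P Smat T s) :
    -ζ ∈ spectratope f P Smat T s := by
  obtain ⟨z, t, ht, rfl, hz⟩ := hζ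
  refine ⟨-z, t, ht, (mulVec_neg z P).symm, fun k => ?_⟩
  simpa using hz k

lemma dotProduct_mulVec_add_two_mul_abs_le {X : Matrix (Fin n) (Fin n) ℝ} {x : Fin n → ℝ}
    {s ξ : ℝ} (h : ∀ ζ ∈ spectratope f P Smat T s, ζ ⬝ᵥ X *ᵥ ζ + 2 * (x ⬝ᵥ ζ) ≤ ξ)
    {ζ : Fin n → ℝ} (hζ : ζ ∈ spectratope f P Smat T s) :
    ζ ⬝ᵥ X *ᵥ ζ + 2 * |x ⬝ᵥ ζ| ≤ ξ := by
  have hneg := h _ (neg_mem_spectratope hζ)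
  rw [mulVec_neg, neg_dotProduct_neg, dotProduct_neg] at hneg
  rcases abs_choice (x ⬝ᵥ ζ) with habs | habs <;> rw [habs]
  exacts [h ζ hζ, hneg]

lemma dotProduct_qPlus_mulVec_le_of_mem_spectratope {X : Matrix (Fin n) (Fin n) ℝ}
    {x : Fin n → ℝ} {s ξ : ℝ}
    (h : ∀ ζ ∈ spectratope f P Smat T s, ζ ⬝ᵥ X *ᵥ ζ + 2 * (x ⬝ᵥ ζ) ≤ ξ)
    {v : Fin nb ⊕ Unit → ℝ} (hv : |v (Sum.inr ())| ≤ 1)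
    (hmem : P *ᵥ (v ∘ Sum.inl) ∈ spectratope f P Smat T s) :
    v ⬝ᵥ qPlus (Pᵀ * X * P) (Pᵀ *ᵥ x) *ᵥ v ≤ ξ := by
  refine dotProduct_qPlus_mulVec_le hv ?_
  have hle := dotProduct_mulVec_add_two_mul_abs_le h hmem
  rwa [Matrix.mul_assoc, ← mulVec_mulVec, ← mulVec_mulVec, dotProduct_mulVec _ Pᵀ, vecMul_transpose,
    mulVec_transpose, ← dotProduct_mulVec]

theorem stmt7_general (hSm : ∀ k i, (Smat k i).IsSymm) (hTconv : Convex ℝ T)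
    (hTpos : ∃ t ∈ T, ∀ k, 0 < t k) {ρ : ℝ} (hρ : 0 < ρ) {X : Matrix (Fin n) (Fin n) ℝ}
    (hX : X.IsSymm) {x : Fin n → ℝ} {κ ξ : ℝ} (hκ : 2 * Real.log (6 * ∑ k, (f k : ℝ)) < κ)
    (hrob : ∀ ζ ∈ spectratope f P Smat T (κ * ρ), ζ ⬝ᵥ X *ᵥ ζ + 2 * (x ⬝ᵥ ζ) ≤ ξ) :
    ∃ Λ : (k : Fin K) → Matrix (Fin (f k)) (Fin (f k)) ℝ, ∃ τ : ℝ,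
      (∀ k, (Λ k).PosSemidef) ∧
      (fromBlocks ((∑ k, calSstar (Smat k) (Λ k)) - Pᵀ * X * P)
        (of fun i (_ : Unit) => -(Pᵀ *ᵥ x) i)
        (of fun (_ : Unit) j => -(Pᵀ *ᵥ x) j)
        (of fun _ _ => τ)).PosSemidef ∧
      BddAbove ((fun t => ∑ k, lamOf Λ k * t k) '' T) ∧ ρ * suppFn T (lamOf Λ) + τ ≤ ξ := by
  have hM : (qPlus (Pᵀ * X * P) (Pᵀ *ᵥ x)).IsHermitian :=
    isHermitian_qPlus (isHermitian_conjTranspose_mul_mul P hX) _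
  have hS (k : Fin K) : ∀ i : Fin nb ⊕ Unit, (Sum.elim (Smat k) 0 i).IsHermitian :=
    Sum.rec (hSm k) fun _ => isHermitian_zero
  obtain ⟨t₀, ht₀, ht₀pos⟩ := hTpos
  obtain ⟨Λ, τ, hΛ, hcert, hbound⟩ := exists_quadratic_certificate hM hS (hTconv.smul ρ)
    ⟨_, Set.smul_mem_smul_set ht₀, fun k => mul_pos hρ (ht₀pos k)⟩ (i₀ := Sum.inr ()) (c := κ)
    (ξ := ξ) (by simpa using hκ) (by
      rintro v hv _ ⟨t, ht, rfl⟩ hpsd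
      exact dotProduct_qPlus_mulVec_le_of_mem_spectratope hrob hv
        ⟨_, t, ht, rfl, fun k => by simpa [Fintype.sum_sum_type, mul_assoc] using hpsd k⟩)
  rw [sum_calSAdjoint_add_single_sub_qPlus] at hcert
  have hsupp : ∀ b ∈ (fun t => ∑ k, lamOf Λ k * t k) '' T, b ≤ (ξ - τ) / ρ := by
    rintro _ ⟨t, ht, rfl⟩
    rw [le_div_iff₀ hρ, Finset.sum_mul]
    have hle := hbound _ (Set.smul_mem_smul_set ht)
    simp only [Pi.smul_apply, smul_eq_mul, mul_comm ρ, ← mul_assoc] at hle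
    exact le_sub_iff_add_le.2 hle
  have hsup := csSup_le (Set.Nonempty.image _ ⟨t₀, ht₀⟩) hsupp
  rw [le_div_iff₀ hρ] at hsup
  exact ⟨Λ, τ, hΛ, hcert, ⟨_, hsupp⟩, by rw [suppFn]; linarith⟩

end Spectratope

lemma two_mul_log_six_mul_sum_lt {K : ℕ} (hK : 1 ≤ K) {f : Fin K → ℕ} (hf : ∀ k, 1 ≤ f k) :
    2 * Real.log (6 * ∑ k, (f k : ℝ)) < 2 * Real.log (8 * ∑ k, (f k : ℝ)) := by
  have hsum : (0 : ℝ) < ∑ k, (f k : ℝ) :=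
    Finset.sum_pos (fun k _ => Nat.cast_pos.2 (hf k)) ⟨⟨0, hK⟩, Finset.mem_univ _⟩
  gcongr
  norm_num

theorem stmt7 {n nb K : ℕ} (hK : 1 ≤ K)
    (P : Matrix (Fin n) (Fin nb) ℝ)
    (f : Fin K → ℕ) (hf : ∀ k, 1 ≤ f k)
    (Smat : (k : Fin K) → Fin nb → Matrix (Fin (f k)) (Fin (f k)) ℝ)
    (hSm : ∀ k i, (Smat k i).IsSymm)
    (hnd : ∀ z : Fin nb → ℝ, (∀ k, (∑ i, z i • Smat k i) = 0) → z = 0)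
    (T : Set (Fin K → ℝ))
    (hTne : T.Nonempty) (hTconv : Convex ℝ T) (hTcomp : IsCompact T)
    (hTnonneg : ∀ t ∈ T, ∀ k, 0 ≤ t k)
    (hTmono : ∀ t t' : Fin K → ℝ, (∀ k, 0 ≤ t k) → (∀ k, t k ≤ t' k) → t' ∈ T → t ∈ T)
    (hTpos : ∃ t ∈ T, ∀ k, 0 < t k)
    (ρ : ℝ) (hρ : 0 < ρ)
    (X : Matrix (Fin n) (Fin n) ℝ) (hX : X.IsSymm) (x : Fin n → ℝ) (ξ : ℝ)
    (hrob : ∀ ζ ∈ spectratope f P Smat T (2 * Real.log (8 * (∑ k, (f k : ℝ))) * ρ),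
      ζ ⬝ᵥ X *ᵥ ζ + 2 * (x ⬝ᵥ ζ) ≤ ξ) :
    ∃ Λ : (k : Fin K) → Matrix (Fin (f k)) (Fin (f k)) ℝ, ∃ τ : ℝ,
      (∀ k, (Λ k).PosSemidef) ∧
      (Matrix.fromBlocks ((∑ k, calSstar (Smat k) (Λ k)) - Pᵀ * X * P)
        (Matrix.of fun i (_ : Unit) => -(Pᵀ *ᵥ x) i)
        (Matrix.of fun (_ : Unit) j => -(Pᵀ *ᵥ x) j)
        (Matrix.of fun _ _ => τ)).PosSemidef ∧
      ρ * suppFn T (lamOf Λ) + τ ≤ ξ := by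
  obtain ⟨Λ, τ, hΛ, hcert, -, hbound⟩ :=
    stmt7_general hSm hTconv hTpos hρ hX (two_mul_log_six_mul_sum_lt hK hf) hrob
  exact ⟨Λ, τ, hΛ, hcert, hbound⟩
end
end

section
/- Let E be a finite-dimensional real inner product space, 𝐊 ⊆ E a regular cone (closed, convex, pointed, with nonempty interior), and 𝐊* its dual cone. Let W ⊆ ℝ^n be a nonempty convex set, f : W → ℝ convex on W, and g : W → E be 𝐊-convex on W. Suppose the primal problem Opt(P) = inf{ f(w) : w ∈ W, −g(w) ∈ 𝐊 } is feasible and bounded below, and the Slater condition holds: there exists w̄ ∈ W with −g(w̄) in the interior of 𝐊. Then there exists Λ* ∈ 𝐊* with inf_{w∈W} [ f(w) + ⟨Λ*, g(w)⟩ ] = Opt(P); in particular the dual problem is solvable and Opt(D) = Opt(P). -/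
open scoped RealInnerProductSpace

noncomputable section

/-! The set of pairs `(y, t)` such that some `w ∈ W` satisfies `g w ≤ y` in the order of the cone
and `f w ≤ t` is convex, and the optimal value `p` is the infimum of its intersection with the axis
`{0} × ℝ`. Hence `(0, p)` is not an interior point, and there is a supporting hyperplane
`l y + s * t = s * p` at it. The set is stable under adding elements of the cone to `y`, so `l` is
nonnegative on the cone. A Slater point puts `(0, t)` in the interior for large `t`, so the
hyperplane is not vertical: `0 < s`, and `s⁻¹ • l` is the multiplier. -/

theorem exists_pointedCone_coe_eq {𝕜 E : Type*} [Field 𝕜] [LinearOrder 𝕜] [IsStrictOrderedRing 𝕜]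
    [AddCommGroup E] [Module 𝕜 E] {S : Set E} (hne : S.Nonempty) (hconv : Convex 𝕜 S)
    (hsmul : ∀ x ∈ S, ∀ c : 𝕜, 0 ≤ c → c • x ∈ S) : ∃ K : PointedCone 𝕜 E, (K : Set E) = S := by
  have hadd : ∀ x ∈ S, ∀ y ∈ S, x + y ∈ S := fun x hx y hy ↦ by
    have hmid : midpoint 𝕜 x y ∈ S := hconv.midpoint_mem hx hy
    simpa [midpoint_eq_smul_add, smul_smul] using hsmul _ hmid 2 zero_le_two
  exact ⟨.ofConeComb S hne fun x hx y hy a ha b hb ↦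
    hadd _ (hsmul x hx a ha) _ (hsmul y hy b hb), rfl⟩

theorem map_nonneg_of_bddBelow_image_pointedCone {𝕜 E : Type*} [Field 𝕜] [LinearOrder 𝕜]
    [IsStrictOrderedRing 𝕜] [AddCommGroup E] [Module 𝕜 E] {K : PointedCone 𝕜 E} {l : E →ₗ[𝕜] 𝕜}
    (hl : BddBelow (l '' K)) {x : E} (hx : x ∈ K) : 0 ≤ l x := by
  obtain ⟨c, hc⟩ := hl
  have hc_le : ∀ y ∈ K, c ≤ l y := fun y hy ↦ hc (Set.mem_image_of_mem l hy)
  by_contra! hneg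
  have hc_nonpos : c ≤ 0 := by simpa using hc_le 0 K.zero_mem
  have hcoeff : 0 ≤ (c - 1) / l x := div_nonneg_of_nonpos (by linarith) hneg.le
  have hle : c ≤ c - 1 := by
    simpa [div_mul_cancel₀ _ hneg.ne] using hc_le _ (K.smul_mem hcoeff hx)
  linarith

theorem exists_strongDual_lt_interior_le {E : Type*} [TopologicalSpace E] [AddCommGroup E]
    [IsTopologicalAddGroup E] [Module ℝ E] [ContinuousSMul ℝ E] {s : Set E} {x : E}
    (hs : Convex ℝ s) (hint : (interior s).Nonempty) (hx : x ∉ interior s) :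
    ∃ φ : StrongDual ℝ E, (∀ y ∈ interior s, φ x < φ y) ∧ ∀ y ∈ s, φ x ≤ φ y := by
  obtain ⟨φ, hφ⟩ := geometric_hahn_banach_point_open hs.interior isOpen_interior hx
  refine ⟨φ, hφ, fun y hy ↦ ?_⟩
  have hy_closure : y ∈ closure (interior s) := by
    rw [hs.closure_interior_eq_closure_of_nonempty_interior hint]
    exact subset_closure hy
  exact closure_minimal (fun z hz ↦ (hφ z hz).le)
    (isClosed_le continuous_const φ.continuous) hy_closure

section ConicProgram

variable {V E : Type*} [AddCommGroup E] [Module ℝ E] {K : PointedCone ℝ E} {W : Set V}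
  {f : V → ℝ} {g : V → E} {p : ℝ}

/-- Convexity of `g` on `W` with respect to the preorder `x ≤ y ↔ y - x ∈ K`. Mathlib's `ConvexOn`
requires a partial order on the codomain, which would force `K` to be salient. -/
def ConeConvexOn [AddCommGroup V] [Module ℝ V] (K : PointedCone ℝ E) (W : Set V) (g : V → E) :
    Prop :=
  ∀ u ∈ W, ∀ v ∈ W, ∀ a : ℝ, 0 ≤ a → a ≤ 1 →
    a • g u + (1 - a) • g v - g (a • u + (1 - a) • v) ∈ K

/-- The upper image of the program of minimizing `f` over `W` subject to `-g w ∈ K`: the pairs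
of a perturbation `y` of the constraint and a value `t` attained, up to the orders of `E` and `ℝ`,
by some `w ∈ W`. Its section over `y = 0` describes the unperturbed program. -/
def upperImage (K : PointedCone ℝ E) (W : Set V) (f : V → ℝ) (g : V → E) : Set (E × ℝ) :=
  {z | ∃ w ∈ W, z.1 - g w ∈ K ∧ f w ≤ z.2}

theorem ConeConvexOn.convex_upperImage [AddCommGroup V] [Module ℝ V] (hg : ConeConvexOn K W g)
    (hf : ConvexOn ℝ W f) : Convex ℝ (upperImage K W f g) := by
  rintro ⟨y₁, t₁⟩ ⟨u, hu, hy₁, ht₁⟩ ⟨y₂, t₂⟩ ⟨v, hv, hy₂, ht₂⟩ a b ha hb hab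
  obtain rfl : b = 1 - a := by linarith
  refine ⟨a • u + (1 - a) • v, hf.1 hu hv ha hb hab, ?_, ?_⟩
  · have hsum := K.add_mem (K.convex hy₁ hy₂ ha hb hab) (hg u hu v hv a ha (by linarith))
    convert hsum using 1
    simp only [Prod.fst_add, Prod.smul_fst, smul_sub]
    abel
  · calc f (a • u + (1 - a) • v) ≤ a • f u + (1 - a) • f v := hf.2 hu hv ha hb hab
      _ ≤ a • t₁ + (1 - a) • t₂ := by gcongr

variable [TopologicalSpace E]

theorem zero_mk_mem_interior_upperImage [ContinuousSub E] {w : V} {t : ℝ} (hw : w ∈ W)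
    (hgw : -g w ∈ interior (K : Set E)) (ht : f w < t) :
    ((0, t) : E × ℝ) ∈ interior (upperImage K W f g) := by
  have hopen : IsOpen (((· - g w) ⁻¹' interior (K : Set E)) ×ˢ Set.Ioi (f w)) :=
    (isOpen_interior.preimage (by fun_prop)).prod isOpen_Ioi
  refine interior_maximal ?_ hopen ⟨by simpa using hgw, ht⟩
  rintro ⟨y, r⟩ ⟨hy, hr⟩
  exact ⟨w, hw, interior_subset hy, le_of_lt hr⟩

theorem zero_mk_notMem_interior_upperImage (hp : ∀ w ∈ W, -g w ∈ K → p ≤ f w) :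
    ((0, p) : E × ℝ) ∉ interior (upperImage K W f g) := by
  intro hmem
  have hnear : ∀ᶠ t in nhds p, ((0, t) : E × ℝ) ∈ upperImage K W f g :=
    (Continuous.prodMk_right (0 : E)).continuousAt.eventually (mem_interior_iff_mem_nhds.1 hmem)
  obtain ⟨t, htp, w, hw, hgw, hft⟩ := hnear.exists_lt
  have hpw : p ≤ f w := hp w hw (by simpa using hgw)
  exact (hpw.trans hft).not_gt htp

variable [IsTopologicalAddGroup E] [ContinuousSMul ℝ E] [AddCommGroup V] [Module ℝ V]

theorem ConeConvexOn.exists_supporting_upperImage (hg : ConeConvexOn K W g) (hf : ConvexOn ℝ W f)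
    (hSlater : ∃ w ∈ W, -g w ∈ interior (K : Set E)) (hp : ∀ w ∈ W, -g w ∈ K → p ≤ f w) :
    ∃ (l : StrongDual ℝ E) (s : ℝ), 0 < s ∧ ∀ z ∈ upperImage K W f g, s * p ≤ l z.1 + s * z.2 := by
  obtain ⟨w₀, hw₀, hgw₀⟩ := hSlater
  have hinterior : ((0, f w₀ + 1) : E × ℝ) ∈ interior (upperImage K W f g) :=
    zero_mk_mem_interior_upperImage hw₀ hgw₀ (lt_add_one _)
  obtain ⟨φ, hφ_lt, hφ_le⟩ := exists_strongDual_lt_interior_le (hg.convex_upperImage hf)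
    ⟨_, hinterior⟩ (zero_mk_notMem_interior_upperImage hp)
  obtain ⟨l, s, hφ⟩ : ∃ (l : StrongDual ℝ E) (s : ℝ), ∀ y t, φ (y, t) = l y + s * t := by
    refine ⟨φ.comp (.inl ℝ E ℝ), φ (0, 1), fun y t ↦ ?_⟩
    rw [mul_comm, ← smul_eq_mul, ← map_smul, ContinuousLinearMap.comp_apply, ← map_add]
    simp
  have hs : 0 < s := by
    have hlt : s * p < s * (f w₀ + 1) := by simpa [hφ] using hφ_lt _ hinterior
    have hp_lt : p < f w₀ + 1 := (hp w₀ hw₀ (interior_subset hgw₀)).trans_lt (lt_add_one _)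
    exact (mul_pos_iff_of_pos_right (sub_pos.2 hp_lt)).1 (by linarith)
  exact ⟨l, s, hs, fun ⟨y, t⟩ hz ↦ by simpa [hφ] using hφ_le (y, t) hz⟩

theorem ConeConvexOn.exists_le_lagrangian (hg : ConeConvexOn K W g) (hf : ConvexOn ℝ W f)
    (hSlater : ∃ w ∈ W, -g w ∈ interior (K : Set E)) (hp : ∀ w ∈ W, -g w ∈ K → p ≤ f w) :
    ∃ l : StrongDual ℝ E, (∀ x ∈ K, 0 ≤ l x) ∧ ∀ w ∈ W, p ≤ f w + l (g w) := by
  obtain ⟨l, s, hs, hsupp⟩ := hg.exists_supporting_upperImage hf hSlater hp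
  have hsupp_add : ∀ w ∈ W, ∀ x ∈ K, s * p ≤ l (g w) + l x + s * f w := fun w hw x hx ↦ by
    simpa using hsupp (g w + x, f w) ⟨w, hw, by simpa using hx, le_rfl⟩
  obtain ⟨w₀, hw₀, -⟩ := hSlater
  have hl_bdd : BddBelow (l.toLinearMap '' K) := by
    refine ⟨s * p - l (g w₀) - s * f w₀, ?_⟩
    rintro _ ⟨x, hx, rfl⟩
    rw [ContinuousLinearMap.coe_coe]
    linarith [hsupp_add w₀ hw₀ x hx]
  have hl_nonneg : ∀ x ∈ K, 0 ≤ l x := fun x hx ↦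
    map_nonneg_of_bddBelow_image_pointedCone hl_bdd hx
  refine ⟨s⁻¹ • l, fun x hx ↦ mul_nonneg (inv_nonneg.2 hs.le) (hl_nonneg x hx), fun w hw ↦ ?_⟩
  have hsw : s * p ≤ l (g w) + s * f w := by simpa using hsupp_add w hw 0 K.zero_mem
  calc p = s⁻¹ * (s * p) := (inv_mul_cancel_left₀ hs.ne' p).symm
    _ ≤ s⁻¹ * (l (g w) + s * f w) := by gcongr
    _ = f w + s⁻¹ * l (g w) := by field_simp; ring

theorem stmt9_general (hf : ConvexOn ℝ W f) (hg : ConeConvexOn K W g)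
    (hbdd : ∃ c : ℝ, ∀ w ∈ W, -g w ∈ K → c ≤ f w)
    (hSlater : ∃ w ∈ W, -g w ∈ interior (K : Set E)) :
    ∃ l : StrongDual ℝ E, (∀ x ∈ K, 0 ≤ l x) ∧
      sInf {v : ℝ | ∃ w ∈ W, v = f w + l (g w)} =
        sInf {v : ℝ | ∃ w ∈ W, -g w ∈ K ∧ v = f w} := by
  set P : Set ℝ := {v : ℝ | ∃ w ∈ W, -g w ∈ K ∧ v = f w}
  obtain ⟨c, hc⟩ := hbdd
  have hP_bdd : BddBelow P := ⟨c, by rintro _ ⟨w, hw, hgw, rfl⟩; exact hc w hw hgw⟩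
  obtain ⟨l, hlK, hl⟩ := hg.exists_le_lagrangian hf hSlater
    (p := sInf P) fun w hw hgw ↦ csInf_le hP_bdd ⟨w, hw, hgw, rfl⟩
  obtain ⟨w₀, hw₀, hgw₀⟩ := hSlater
  have hl_lower : sInf P ∈ lowerBounds {v : ℝ | ∃ w ∈ W, v = f w + l (g w)} := by
    rintro _ ⟨w, hw, rfl⟩
    exact hl w hw
  refine ⟨l, hlK, le_antisymm ?_ (le_csInf ⟨_, w₀, hw₀, rfl⟩ hl_lower)⟩
  refine le_csInf ⟨_, w₀, hw₀, interior_subset hgw₀, rfl⟩ ?_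
  rintro _ ⟨w, hw, hgw, rfl⟩
  calc sInf {v : ℝ | ∃ w ∈ W, v = f w + l (g w)} ≤ f w + l (g w) :=
        csInf_le ⟨_, hl_lower⟩ ⟨w, hw, rfl⟩
    _ ≤ f w := by simpa using hlK _ hgw

end ConicProgram

theorem stmt9 {E : Type*} [NormedAddCommGroup E] [InnerProductSpace ℝ E]
    [FiniteDimensional ℝ E] {n : ℕ}
    (Kc : Set E) (hKclosed : IsClosed Kc) (hKconv : Convex ℝ Kc)
    (hKcone : ∀ x ∈ Kc, ∀ c : ℝ, 0 ≤ c → c • x ∈ Kc)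
    (hKpointed : Kc ∩ (-Kc) ⊆ {0})
    (hKint : (interior Kc).Nonempty)
    (W : Set (EuclideanSpace ℝ (Fin n))) (hWne : W.Nonempty) (hWconv : Convex ℝ W)
    (f : EuclideanSpace ℝ (Fin n) → ℝ) (hf : ConvexOn ℝ W f)
    (g : EuclideanSpace ℝ (Fin n) → E)
    (hg : ∀ u ∈ W, ∀ v ∈ W, ∀ a : ℝ, 0 ≤ a → a ≤ 1 →
      a • g u + (1 - a) • g v - g (a • u + (1 - a) • v) ∈ Kc)
    (hfeas : ∃ w ∈ W, -g w ∈ Kc)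
    (hbdd : ∃ c : ℝ, ∀ w ∈ W, -g w ∈ Kc → c ≤ f w)
    (hSlater : ∃ w ∈ W, -g w ∈ interior Kc) :
    ∃ Λ : E, (∀ x ∈ Kc, (0 : ℝ) ≤ ⟪Λ, x⟫) ∧
      sInf {v : ℝ | ∃ w ∈ W, v = f w + ⟪Λ, g w⟫} =
        sInf {v : ℝ | ∃ w ∈ W, -g w ∈ Kc ∧ v = f w} := by
  obtain ⟨K, rfl⟩ := exists_pointedCone_coe_eq (hKint.mono interior_subset) hKconv hKcone
  obtain ⟨l, hl⟩ := stmt9_general hf hg hbdd hSlater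
  exact ⟨(InnerProductSpace.toDual ℝ E).symm l, by simpa using hl⟩
end
end

section
/- Let K ≥ 1 be an integer, P a real n×n̄ matrix, S_1,…,S_K symmetric positive semidefinite n̄×n̄ matrices with S_1+⋯+S_K positive definite, 𝒯 ⊆ ℝ_{≥0}^K a nonempty convex compact monotone set containing a point with all coordinates positive, and ρ > 0. Let p ∈ ℝ^n and q, γ ∈ ℝ. Then 2pᵀζ + q ≤ γ holds for every ζ ∈ 𝒳[ρ] if and only if there exist λ ∈ ℝ^K with λ ≥ 0 and α ∈ ℝ such that the block matrix [[α, −pᵀP],[−Pᵀp, ∑_k λ_k S_k]] is positive semidefinite and α + ρ·φ_𝒯(λ) + q ≤ γ. -/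
open Matrix BigOperators

noncomputable section

/-!
The inequality `2 pᵀ ζ + q ≤ γ` on the ellitope says that a concave function of `(z, t)`, `t ∈ 𝒯`,
is at most `γ` wherever the convex constraints `zᵀ S_k z - ρ t_k ≤ 0` hold. Slater's condition holds
at `z = 0` and a positive `t ∈ 𝒯`, so this amounts to the existence of multipliers `λ ≥ 0` with
`2 pᵀ P z + q ≤ γ + zᵀ (∑ λ_k S_k) z - ρ λᵀ t` for all `z` and all `t ∈ 𝒯`. The worst `t` turns
`λᵀ t` into `φ_𝒯(λ)`, and a uniform bound `2 bᵀ z ≤ α + zᵀ M z` is positive semidefiniteness of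
`[[α, -bᵀ], [-b, M]]`.
-/

section LagrangeDuality

variable {E ι : Type*} [AddCommGroup E] [Module ℝ E] [Fintype ι]

theorem exists_nonneg_ne_zero_forall_dotProduct_nonneg {A : Set (ι → ℝ)} (hA : Convex ℝ A)
    (hne : A.Nonempty) (hA_nonneg : ∀ a ∈ A, ∃ i, 0 ≤ a i) :
    ∃ w : ι → ℝ, 0 ≤ w ∧ w ≠ 0 ∧ ∀ a ∈ A, 0 ≤ w ⬝ᵥ a := by
  classical
  let B : Set (ι → ℝ) := Set.univ.pi fun _ => Set.Iio 0
  have hB_open : IsOpen B := isOpen_set_pi Set.finite_univ fun _ _ => isOpen_Iio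
  have hB_closure : closure B = Set.Iic 0 := by
    simp only [B, closure_pi_set, closure_Iio]
    ext b
    simp [Pi.le_def]
  have hdisj : Disjoint B A := Set.disjoint_left.2 fun b hb hbA =>
    let ⟨i, hi⟩ := hA_nonneg b hbA
    hi.not_gt (hb i (Set.mem_univ i))
  obtain ⟨φ, c, hφB, hφA⟩ :=
    geometric_hahn_banach_open (convex_pi fun _ _ => convex_Iio 0) hB_open hA hdisj
  obtain ⟨w, hw⟩ := (dotProductEquiv ℝ ι).surjective φ.toLinearMap
  replace hw (x : ι → ℝ) : φ x = w ⬝ᵥ x := (LinearMap.congr_fun hw x).symm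
  have hφ_le {b : ι → ℝ} (hb : b ≤ 0) : φ b ≤ c :=
    closure_minimal (fun b hb => (hφB b hb).le) (isClosed_le φ.continuous continuous_const)
      (hB_closure ▸ hb)
  have hc : 0 ≤ c := by simpa using hφ_le le_rfl
  -- A linear functional bounded above on a cone is nonpositive there.
  have hφ_nonpos {b : ι → ℝ} (hb : b ≤ 0) : φ b ≤ 0 := by
    by_contra! hpos
    have := hφ_le (smul_nonpos_of_nonneg_of_nonpos (by positivity : 0 ≤ (c + 1) / φ b) hb)
    rw [map_smul, smul_eq_mul, div_mul_cancel₀ _ hpos.ne'] at this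
    linarith
  refine ⟨w, fun i => ?_, ?_, fun a ha => hw a ▸ hc.trans (hφA a ha)⟩
  · have := hφ_nonpos (b := -Pi.single i 1) (by simp)
    simpa [hw] using this
  · rintro rfl
    obtain ⟨a, ha⟩ := hne
    have hlt := (hφB (fun _ => -1) (by simp [B])).trans_le (hφA a ha)
    simp [hw] at hlt

theorem exists_nonneg_ne_zero_forall_dotProduct_nonneg_of_convexOn {C : Set E} {g : E → ι → ℝ}
    (hC : C.Nonempty) (hg : ConvexOn ℝ C g) (h : ∀ x ∈ C, ∃ i, 0 ≤ g x i) :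
    ∃ w : ι → ℝ, 0 ≤ w ∧ w ≠ 0 ∧ ∀ x ∈ C, 0 ≤ w ⬝ᵥ g x := by
  let epi : Set (E × (ι → ℝ)) := {v | v.1 ∈ C ∧ g v.1 ≤ v.2}
  have hmem {x : E} (hx : x ∈ C) : g x ∈ Prod.snd '' epi := ⟨(x, g x), ⟨hx, le_rfl⟩, rfl⟩
  have hne : (Prod.snd '' epi).Nonempty := let ⟨_, hx⟩ := hC; ⟨_, hmem hx⟩
  obtain ⟨w, hw, hw0, hw_nonneg⟩ := exists_nonneg_ne_zero_forall_dotProduct_nonneg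
    (hg.convex_epigraph.linear_image (LinearMap.snd ℝ E (ι → ℝ))) hne (by
      rintro _ ⟨⟨x, a⟩, ⟨hx, hle⟩, rfl⟩
      exact (h x hx).imp fun i hi => hi.trans (hle i))
  exact ⟨w, hw, hw0, fun x hx => hw_nonneg _ (hmem hx)⟩

theorem eq_zero_of_dotProduct_nonneg_of_forall_neg {w v : ι → ℝ} (hw : 0 ≤ w)
    (hv : ∀ i, v i < 0) (h : 0 ≤ w ⬝ᵥ v) : w = 0 := by
  have hterm (i : ι) : w i * v i ≤ 0 := mul_nonpos_of_nonneg_of_nonpos (hw i) (hv i).le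
  have hsum : ∑ i, w i * v i = 0 := (Finset.sum_nonpos fun i _ => hterm i).antisymm h
  funext i
  have := (Finset.sum_eq_zero_iff_of_nonpos fun i _ => hterm i).1 hsum i (Finset.mem_univ i)
  exact (mul_eq_zero.1 this).resolve_right (hv i).ne

theorem exists_lagrange_multiplier_s12 {C : Set E} {f : E → ℝ} {g : E → ι → ℝ} {c : ℝ}
    (hf : ConcaveOn ℝ C f) (hg : ConvexOn ℝ C g) (slater : ∃ x ∈ C, ∀ i, g x i < 0)
    (h : ∀ x ∈ C, g x ≤ 0 → f x ≤ c) :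
    ∃ lam : ι → ℝ, 0 ≤ lam ∧ ∀ x ∈ C, f x ≤ c + lam ⬝ᵥ g x := by
  obtain ⟨x₀, hx₀, hgx₀⟩ := slater
  -- The objective joins the constraints, and Slater's condition makes its weight positive.
  let G (x : E) (o : Option ι) : ℝ := o.elim (c - f x) (g x)
  have hG : ConvexOn ℝ C G := ⟨hf.1, fun x hx y hy a b ha hb hab o => by
    cases o with
    | none => exact ((convexOn_const c hf.1).sub hf).2 hx hy ha hb hab
    | some i => exact hg.2 hx hy ha hb hab i⟩
  obtain ⟨w, hw, hw0, hwG⟩ := exists_nonneg_ne_zero_forall_dotProduct_nonneg_of_convexOn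
    ⟨x₀, hx₀⟩ hG fun x hx => by
      by_contra! hlt
      have hfx : c - f x < 0 := hlt none
      linarith [h x hx fun i => (hlt (some i)).le]
  let ν : ℝ := w none
  let μ : ι → ℝ := fun i => w (some i)
  have hμ : 0 ≤ μ := fun i => hw (some i)
  have key {x : E} (hx : x ∈ C) : 0 ≤ ν * (c - f x) + μ ⬝ᵥ g x := by
    simpa [dotProduct, Fintype.sum_option, G] using hwG x hx
  have hν : 0 < ν := by
    refine (hw none).lt_of_ne' fun hν0 => hw0 ?_
    have hμ0 : μ = 0 :=
      eq_zero_of_dotProduct_nonneg_of_forall_neg hμ hgx₀ (by simpa [ν, hν0] using key hx₀)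
    funext o
    cases o with
    | none => exact hν0
    | some i => exact congrFun hμ0 i
  refine ⟨ν⁻¹ • μ, smul_nonneg (inv_nonneg.2 hν.le) hμ, fun x hx => ?_⟩
  have hdiv : 0 ≤ ν⁻¹ * (ν * (c - f x) + μ ⬝ᵥ g x) := mul_nonneg (inv_nonneg.2 hν.le) (key hx)
  rw [mul_add, inv_mul_cancel_left₀ hν.ne'] at hdiv
  rw [smul_dotProduct, smul_eq_mul]
  linarith

theorem forall_le_iff_exists_lagrange_multiplier {C : Set E} {f : E → ℝ} {g : E → ι → ℝ} {c : ℝ}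
    (hf : ConcaveOn ℝ C f) (hg : ConvexOn ℝ C g) (slater : ∃ x ∈ C, ∀ i, g x i < 0) :
    (∀ x ∈ C, g x ≤ 0 → f x ≤ c) ↔
      ∃ lam : ι → ℝ, 0 ≤ lam ∧ ∀ x ∈ C, f x ≤ c + lam ⬝ᵥ g x := by
  refine ⟨exists_lagrange_multiplier_s12 hf hg slater, fun ⟨lam, hlam, hle⟩ x hx hgx => ?_⟩
  have := dotProduct_le_dotProduct_of_nonneg_left hgx hlam
  rw [dotProduct_zero] at this
  linarith [hle x hx]

end LagrangeDuality

section BorderedMatrix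

variable {m : Type*}

/-- The bordered matrix `[[α, -bᵀ], [-b, M]]`, whose quadratic form is the homogenization of
`z ↦ α - 2 bᵀ z + zᵀ M z`. The border comes first and is indexed by `Unit`. -/
def borderedMatrix (α : ℝ) (b : m → ℝ) (M : Matrix m m ℝ) : Matrix (Unit ⊕ m) (Unit ⊕ m) ℝ :=
  Matrix.fromBlocks (Matrix.of fun _ _ => α) (Matrix.of fun _ j => -b j)
    (Matrix.of fun i _ => -b i) M

theorem isHermitian_borderedMatrix {M : Matrix m m ℝ} (hM : M.IsHermitian) (α : ℝ) (b : m → ℝ) :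
    (borderedMatrix α b M).IsHermitian := by
  refine .fromBlocks ?_ ?_ hM <;> ext i j <;> simp

variable [Fintype m]

theorem dotProduct_borderedMatrix_mulVec (α : ℝ) (b : m → ℝ) (M : Matrix m m ℝ) (s : ℝ)
    (z : m → ℝ) :
    Sum.elim (fun _ => s) z ⬝ᵥ borderedMatrix α b M *ᵥ Sum.elim (fun _ => s) z =
      α * s ^ 2 - 2 * s * (b ⬝ᵥ z) + z ⬝ᵥ M *ᵥ z := by
  have htop : (Matrix.of fun (_ : Unit) j => -b j) *ᵥ z = fun _ => -(b ⬝ᵥ z) := by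
    ext
    simp [mulVec, dotProduct]
  have hleft : (Matrix.of fun i (_ : Unit) => -b i) *ᵥ (fun _ => s) = -(s • b) := by
    ext
    simp [mulVec, dotProduct, mul_comm]
  have hcorner : (Matrix.of fun (_ _ : Unit) => α) *ᵥ (fun _ => s) = fun _ => α * s := by
    ext
    simp [mulVec, dotProduct]
  rw [borderedMatrix, fromBlocks_mulVec, Sum.elim_comp_inl, Sum.elim_comp_inr, htop, hleft, hcorner,
    sumElim_dotProduct_sumElim, dotProduct_add z, dotProduct_neg, dotProduct_smul,
    dotProduct_comm z b]
  simp only [dotProduct, Pi.add_apply, Finset.univ_unique, Finset.sum_singleton, smul_eq_mul]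
  ring

theorem posSemidef_borderedMatrix_iff {M : Matrix m m ℝ} (hM : M.IsHermitian) (α : ℝ)
    (b : m → ℝ) :
    (borderedMatrix α b M).PosSemidef ↔ ∀ z : m → ℝ, 2 * (b ⬝ᵥ z) ≤ α + z ⬝ᵥ M *ᵥ z := by
  refine ⟨fun h z => ?_, fun h => ?_⟩
  · have := h.dotProduct_mulVec_nonneg (Sum.elim (fun _ => 1) z)
    rw [star_trivial, dotProduct_borderedMatrix_mulVec] at this
    linarith
  · refine .of_dotProduct_mulVec_nonneg (isHermitian_borderedMatrix hM α b) fun x => ?_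
    obtain ⟨s, z, rfl⟩ : ∃ s z, x = Sum.elim (fun _ => s) z :=
      ⟨x (Sum.inl ()), x ∘ Sum.inr, (Sum.elim_comp_inl_inr x).symm⟩
    rw [star_trivial, dotProduct_borderedMatrix_mulVec]
    -- The bound at `s⁻¹ • z` settles `s ≠ 0`, and `s = 0` follows by continuity.
    refine (dense_compl_singleton (0 : ℝ)).induction (fun s (hs : s ≠ 0) => ?_)
      (isClosed_le continuous_const (by fun_prop)) s
    have hbound := mul_nonneg (sq_nonneg s) (sub_nonneg.2 (h (s⁻¹ • z)))
    simp only [mulVec_smul, dotProduct_smul, smul_dotProduct, smul_eq_mul] at hbound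
    convert hbound using 1
    field_simp
    ring

end BorderedMatrix

theorem convexOn_dotProduct_mulVec {m : Type*} [Fintype m] {M : Matrix m m ℝ}
    (hM : M.PosSemidef) : ConvexOn ℝ Set.univ fun z : m → ℝ => z ⬝ᵥ M *ᵥ z := by
  refine ⟨convex_univ, fun x _ y _ a b ha hb hab => ?_⟩
  obtain rfl : b = 1 - a := by linarith
  have hdiff : 0 ≤ a * (1 - a) * ((x - y) ⬝ᵥ M *ᵥ (x - y)) :=
    mul_nonneg (mul_nonneg ha hb) (hM.dotProduct_mulVec_nonneg (x - y))
  simp only [mulVec_sub, dotProduct_sub, sub_dotProduct] at hdiff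
  simp only [mulVec_add, mulVec_smul, dotProduct_add, add_dotProduct, dotProduct_smul,
    smul_dotProduct, smul_eq_mul]
  linear_combination hdiff

section Ellitope

variable {n nb K : ℕ} {P : Matrix (Fin n) (Fin nb) ℝ} {S : Fin K → Matrix (Fin nb) (Fin nb) ℝ}
  {T : Set (Fin K → ℝ)} {ρ : ℝ}

theorem suppFn_le_iff (hTne : T.Nonempty) (hTbdd : BddAbove T) {lam : Fin K → ℝ} (hlam : 0 ≤ lam)
    {r : ℝ} : suppFn T lam ≤ r ↔ ∀ t ∈ T, lam ⬝ᵥ t ≤ r := by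
  have hmono : Monotone fun t : Fin K → ℝ => lam ⬝ᵥ t := fun _ _ htt' =>
    dotProduct_le_dotProduct_of_nonneg_left htt' hlam
  exact (csSup_le_iff (hmono.map_bddAbove hTbdd) (hTne.image _)).trans Set.forall_mem_image

/-- The constraint functions `(z, t) ↦ zᵀ S_k z - ρ t_k` of the ellitope, as one vector-valued map.
The points of `𝒳[ρ]` are the `P z` for which all of them are nonpositive at `(z, t)` for some
`t ∈ 𝒯`. -/
def ellitopeConstraint (S : Fin K → Matrix (Fin nb) (Fin nb) ℝ) (ρ : ℝ)
    (w : (Fin nb → ℝ) × (Fin K → ℝ)) (k : Fin K) : ℝ :=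
  w.1 ⬝ᵥ S k *ᵥ w.1 - ρ * w.2 k

theorem forall_mem_ellitope_iff {p : (Fin n → ℝ) → Prop} :
    (∀ ζ ∈ ellitope P S T ρ, p ζ) ↔
      ∀ w ∈ Set.univ ×ˢ T, ellitopeConstraint S ρ w ≤ 0 → p (P *ᵥ w.1) := by
  refine ⟨fun h w hw hle => h _ ⟨w.1, w.2, hw.2, rfl, fun k => sub_nonpos.1 (hle k)⟩, ?_⟩
  rintro h _ ⟨z, t, ht, rfl, hz⟩
  exact h (z, t) ⟨Set.mem_univ z, ht⟩ fun k => sub_nonpos.2 (hz k)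

theorem convexOn_ellitopeConstraint (hS : ∀ k, (S k).PosSemidef) (hT : Convex ℝ T) (ρ : ℝ) :
    ConvexOn ℝ (Set.univ ×ˢ T) (ellitopeConstraint S ρ) := by
  refine ⟨convex_univ.prod hT, fun x _ y _ a b ha hb hab k => ?_⟩
  have hquad := (convexOn_dotProduct_mulVec (hS k)).2 (Set.mem_univ x.1) (Set.mem_univ y.1)
    ha hb hab
  simp only [ellitopeConstraint, smul_eq_mul, Prod.fst_add, Prod.smul_fst, Prod.snd_add,
    Prod.smul_snd, Pi.add_apply, Pi.smul_apply] at hquad ⊢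
  linear_combination hquad

theorem dotProduct_ellitopeConstraint (lam : Fin K → ℝ) (z : Fin nb → ℝ) (t : Fin K → ℝ) :
    lam ⬝ᵥ ellitopeConstraint S ρ (z, t) =
      z ⬝ᵥ (∑ k, lam k • S k) *ᵥ z - ρ * (lam ⬝ᵥ t) := by
  simp only [sum_mulVec, dotProduct_sum, smul_mulVec, dotProduct_smul, smul_eq_mul]
  simp only [dotProduct, ellitopeConstraint, mul_sub, Finset.sum_sub_distrib, Finset.mul_sum,
    mul_left_comm ρ]

theorem forall_mem_ellitope_le_iff (hS : ∀ k, (S k).PosSemidef) (hT : Convex ℝ T)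
    (hTbdd : BddAbove T) (hTpos : ∃ t ∈ T, ∀ k, 0 < t k) (hρ : 0 < ρ) {f : (Fin n → ℝ) → ℝ}
    (hf : ConcaveOn ℝ Set.univ f) {c : ℝ} :
    (∀ ζ ∈ ellitope P S T ρ, f ζ ≤ c) ↔ ∃ lam : Fin K → ℝ, 0 ≤ lam ∧
      ∀ z, f (P *ᵥ z) + ρ * suppFn T lam ≤ c + z ⬝ᵥ (∑ k, lam k • S k) *ᵥ z := by
  have hf_lift : ConcaveOn ℝ (Set.univ ×ˢ T) fun w => f (P *ᵥ w.1) :=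
    (hf.comp_linearMap (P.mulVecLin ∘ₗ LinearMap.fst ℝ _ _)).subset (Set.subset_univ _)
      (convex_univ.prod hT)
  have slater : ∃ w ∈ Set.univ ×ˢ T, ∀ k, ellitopeConstraint S ρ w k < 0 := by
    obtain ⟨t, ht, htpos⟩ := hTpos
    exact ⟨(0, t), ⟨Set.mem_univ _, ht⟩,
      fun k => by simpa [ellitopeConstraint] using mul_pos hρ (htpos k)⟩
  rw [forall_mem_ellitope_iff, forall_le_iff_exists_lagrange_multiplier hf_lift
    (convexOn_ellitopeConstraint hS hT ρ) slater]
  refine exists_congr fun lam => and_congr_right fun hlam => ?_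
  calc (∀ w ∈ Set.univ ×ˢ T, f (P *ᵥ w.1) ≤ c + lam ⬝ᵥ ellitopeConstraint S ρ w)
      ↔ ∀ z, ∀ t ∈ T, lam ⬝ᵥ t ≤ (c + z ⬝ᵥ (∑ k, lam k • S k) *ᵥ z - f (P *ᵥ z)) / ρ := by
        simp only [Set.mem_prod, Set.mem_univ, true_and, Prod.forall,
          dotProduct_ellitopeConstraint, le_div_iff₀' hρ]
        exact forall₃_congr fun _ _ _ => by constructor <;> intro <;> linarith
    _ ↔ ∀ z, f (P *ᵥ z) + ρ * suppFn T lam ≤ c + z ⬝ᵥ (∑ k, lam k • S k) *ᵥ z :=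
        forall_congr' fun z => by
          rw [← suppFn_le_iff (hTpos.imp fun _ => And.left) hTbdd hlam, le_div_iff₀' hρ,
            le_sub_iff_add_le']

theorem stmt12_general (P : Matrix (Fin n) (Fin nb) ℝ) (hS : ∀ k, (S k).PosSemidef)
    (hT : Convex ℝ T) (hTbdd : BddAbove T) (hTpos : ∃ t ∈ T, ∀ k, 0 < t k) (hρ : 0 < ρ)
    (p : Fin n → ℝ) (q γ : ℝ) :
    (∀ ζ ∈ ellitope P S T ρ, 2 * (p ⬝ᵥ ζ) + q ≤ γ) ↔
      ∃ lam : Fin K → ℝ, ∃ α : ℝ, (∀ k, 0 ≤ lam k) ∧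
        (borderedMatrix α (Pᵀ *ᵥ p) (∑ k, lam k • S k)).PosSemidef ∧
        α + ρ * suppFn T lam + q ≤ γ := by
  have hconcave : ConcaveOn ℝ Set.univ fun ζ : Fin n → ℝ => 2 * (p ⬝ᵥ ζ) + q :=
    ((2 • dotProductEquiv ℝ (Fin n) p).concaveOn convex_univ).add_const q |>.congr
      fun ζ _ => by simp
  rw [forall_mem_ellitope_le_iff hS hT hTbdd hTpos hρ hconcave]
  refine exists_congr fun lam => ?_
  rw [exists_and_left]
  refine and_congr_right fun hlam => ?_
  have hherm : (∑ k, lam k • S k).IsHermitian :=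
    (posSemidef_sum _ fun k _ => (hS k).smul (hlam k)).isHermitian
  simp only [posSemidef_borderedMatrix_iff hherm, mulVec_transpose, ← dotProduct_mulVec]
  exact ⟨fun h => ⟨γ - q - ρ * suppFn T lam, fun z => by linarith [h z], by linarith⟩,
    fun ⟨α, hα, hle⟩ z => by linarith [hα z]⟩

end Ellitope

theorem stmt12 {n nb K : ℕ} (hK : 1 ≤ K)
    (P : Matrix (Fin n) (Fin nb) ℝ)
    (S : Fin K → Matrix (Fin nb) (Fin nb) ℝ)
    (hS : ∀ k, (S k).PosSemidef)
    (hSsum : (∑ k, S k).PosDef)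
    (T : Set (Fin K → ℝ))
    (hTne : T.Nonempty) (hTconv : Convex ℝ T) (hTcomp : IsCompact T)
    (hTnonneg : ∀ t ∈ T, ∀ k, 0 ≤ t k)
    (hTmono : ∀ t t' : Fin K → ℝ, (∀ k, 0 ≤ t k) → (∀ k, t k ≤ t' k) → t' ∈ T → t ∈ T)
    (hTpos : ∃ t ∈ T, ∀ k, 0 < t k)
    (ρ : ℝ) (hρ : 0 < ρ)
    (p : Fin n → ℝ) (q γ : ℝ) :
    (∀ ζ ∈ ellitope P S T ρ, 2 * (p ⬝ᵥ ζ) + q ≤ γ) ↔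
      (∃ lam : Fin K → ℝ, ∃ α : ℝ, (∀ k, 0 ≤ lam k) ∧
        (Matrix.fromBlocks (Matrix.of fun (_ : Unit) (_ : Unit) => α)
            (Matrix.of fun (_ : Unit) j => -(Pᵀ *ᵥ p) j)
            (Matrix.of fun i (_ : Unit) => -(Pᵀ *ᵥ p) i)
            (∑ k, lam k • S k)).PosSemidef ∧
        α + ρ * suppFn T lam + q ≤ γ) :=
  stmt12_general P hS hTconv hTcomp.isBounded.bddAbove hTpos hρ p q γ
end
end
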